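/- For every real constant C > 0 there exists a constant D > 0 with the following property: for every integer n ≥ 1, every partition λ of n whose number of rows and number of columns are both at most C·√n, and every permutation π ∈ S_n, one has |χ^λ(π)| ≤ ( D·max(1, |π|²/n) / √n )^{|π|}. -/

import Mathlib

open scoped BigOperators

/-- `|π|`: the minimal number of transpositions whose product is `π`; equivalently
`n` minus the number of orbits of `π`. -/
def permLength {n : ℕ} (π : Equiv.Perm (Fin n)) : ℕ :=
  π.cycleType.sum - π.cycleType.card

/-- The full cycle type of `π ∈ S_n`: the cycle type together with `1`s for fixed points. -/
def fullCycleType {n : ℕ} (π : Equiv.Perm (Fin n)) : Multiset ℕ :=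
  π.cycleType + Multiset.replicate (n - π.cycleType.sum) 1

/-- For a partition `λ` of `n` (given as an antitone `lam : Fin n → ℕ`) and a multiset
`k` of positive integers, the irreducible character value `Tr ρ^λ(k)`, defined via
Frobenius' character formula as the coefficient of `x^(λ+δ)` in
`(∑ᵢ xᵢ^{k₁}) ⋯ (∑ᵢ xᵢ^{k_r}) ⋅ ∑_{w ∈ Sₙ} sgn(w) x^{wδ}`, where `δ = (n-1, …, 1, 0)`. -/
noncomputable def frobChar (n : ℕ) (lam : Fin n → ℕ) (k : Multiset ℕ) : ℤ :=
  MvPolynomial.coeff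
    (Finsupp.equivFunOnFinite.symm fun i : Fin n => lam i + (n - 1 - (i : ℕ)))
    ((Multiset.map (fun m => ∑ i : Fin n, MvPolynomial.X i ^ m) k).prod *
      ∑ w : Equiv.Perm (Fin n),
        MvPolynomial.C ((Equiv.Perm.sign w : ℤ)) *
          ∏ i : Fin n, MvPolynomial.X i ^ (n - 1 - ((w i : ℕ))))

/-- The normalized character `χ^λ(π) = Tr ρ^λ(π) / Tr ρ^λ(e)`. -/
noncomputable def normChar (n : ℕ) (lam : Fin n → ℕ) (π : Equiv.Perm (Fin n)) : ℝ :=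
  (frobChar n lam (fullCycleType π) : ℝ) / (frobChar n lam (Multiset.replicate n 1) : ℝ)


namespace BC

open MvPolynomial

/-- power sum -/
noncomputable def psm (n k : ℕ) : MvPolynomial (Fin n) ℤ := ∑ i : Fin n, X i ^ k

/-- the alternant -/
noncomputable def alt (n : ℕ) : MvPolynomial (Fin n) ℤ :=
  ∑ w : Equiv.Perm (Fin n),
        MvPolynomial.C ((Equiv.Perm.sign w : ℤ)) *
          ∏ i : Fin n, MvPolynomial.X i ^ (n - 1 - ((w i : ℕ)))

/-- product of power sums -/
noncomputable def PP (n : ℕ) (μ : Multiset ℕ) : MvPolynomial (Fin n) ℤ := (μ.map (psm n)).prod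

/-- unnormalised character -/
noncomputable def ch {n : ℕ} (l : Fin n → ℕ) (μ : Multiset ℕ) : ℤ :=
  coeff (Finsupp.equivFunOnFinite.symm l) (PP n μ * alt n)

lemma frobChar_eq (n : ℕ) (lam : Fin n → ℕ) (k : Multiset ℕ) :
    frobChar n lam k = ch (fun i : Fin n => lam i + (n - 1 - (i : ℕ))) k := rfl

lemma PP_cons (n k : ℕ) (μ : Multiset ℕ) : PP n (k ::ₘ μ) = psm n k * PP n μ := by
  simp [PP]

lemma PP_add (n : ℕ) (μ ν : Multiset ℕ) : PP n (μ + ν) = PP n μ * PP n ν := by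
  simp [PP]

lemma coeff_X_pow_mul_fun {n : ℕ} (l : Fin n → ℕ) (i : Fin n) (k : ℕ) (f : MvPolynomial (Fin n) ℤ) :
    coeff (Finsupp.equivFunOnFinite.symm l) (X i ^ k * f) =
      if k ≤ l i then coeff (Finsupp.equivFunOnFinite.symm (Function.update l i (l i - k))) f
      else 0 := by
  rw [X_pow_eq_monomial, coeff_monomial_mul']
  have h1 : (Finsupp.single i k ≤ Finsupp.equivFunOnFinite.symm l) ↔ k ≤ l i := by
    simp [Finsupp.single_le_iff]
  simp only [h1, one_mul]
  split_ifs with h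
  · congr 1
    ext j
    by_cases hj : j = i
    · subst hj; simp
    · simp [Function.update_of_ne hj, Finsupp.single_apply, Ne.symm hj]
  · rfl

lemma ch_cons {n : ℕ} (l : Fin n → ℕ) (k : ℕ) (μ : Multiset ℕ) :
    ch l (k ::ₘ μ) = ∑ i, if k ≤ l i then ch (Function.update l i (l i - k)) μ else 0 := by
  unfold ch
  rw [PP_cons, psm, mul_assoc, Finset.sum_mul, coeff_sum]
  exact Finset.sum_congr rfl fun i _ => coeff_X_pow_mul_fun l i k _

lemma rename_psm {n : ℕ} (σ : Equiv.Perm (Fin n)) (k : ℕ) : rename σ (psm n k) = psm n k := by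
  simp only [psm, map_sum, map_pow, rename_X]
  exact Equiv.sum_comp σ (fun i => (X i : MvPolynomial (Fin n) ℤ) ^ k)

lemma rename_PP {n : ℕ} (σ : Equiv.Perm (Fin n)) (μ : Multiset ℕ) :
    rename σ (PP n μ) = PP n μ := by
  induction μ using Multiset.induction_on with
  | empty => simp [PP]
  | cons a s ih => rw [PP_cons, map_mul, ih, rename_psm]

lemma rename_alt {n : ℕ} (σ : Equiv.Perm (Fin n)) :
    rename σ (alt n) = C ((Equiv.Perm.sign σ : ℤ)) * alt n := by
  simp only [alt, map_sum, map_mul, map_prod, map_pow, rename_X, rename_C, Finset.mul_sum]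
  refine Fintype.sum_equiv (Equiv.mulRight σ⁻¹) _ _ fun w => ?_
  rw [← mul_assoc, ← C_mul]
  congr 1
  · congr 1
    simp only [Equiv.coe_mulRight, Equiv.Perm.sign_mul, Equiv.Perm.sign_inv]
    rcases Int.units_eq_one_or (Equiv.Perm.sign σ) with h | h <;> simp [h]
  · refine Fintype.prod_equiv σ _ _ fun i => ?_
    simp

lemma ch_perm {n : ℕ} (l : Fin n → ℕ) (σ : Equiv.Perm (Fin n)) (μ : Multiset ℕ) :
    ch (l ∘ σ) μ = (Equiv.Perm.sign σ : ℤ) * ch l μ := by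
  unfold ch
  rw [← coeff_rename_mapDomain σ σ.injective, map_mul, rename_PP, rename_alt, mul_left_comm,
    coeff_C_mul]
  congr 2
  ext j
  obtain ⟨i, rfl⟩ := σ.surjective j
  rw [Finsupp.mapDomain_apply σ.injective]
  simp

lemma ch_eq_zero {n : ℕ} (l : Fin n → ℕ) (μ : Multiset ℕ) (h : ¬ Function.Injective l) :
    ch l μ = 0 := by
  simp only [Function.Injective, not_forall] at h
  obtain ⟨a, b, hab, hne⟩ := h
  have h1 := ch_perm l (Equiv.swap a b) μ
  have h2 : l ∘ (Equiv.swap a b) = l := by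
    ext i
    simp only [Function.comp]
    rcases Equiv.swap_apply_eq_iff.mp (rfl : Equiv.swap a b i = _) with _
    by_cases hi : i = a
    · subst hi; simp [hab]
    · by_cases hi' : i = b
      · subst hi'; simp [hab]
      · rw [Equiv.swap_apply_of_ne_of_ne hi hi']
  rw [h2, Equiv.Perm.sign_swap hne] at h1
  simp at h1
  omega

lemma ch_swap_abs {n : ℕ} (l : Fin n → ℕ) (σ : Equiv.Perm (Fin n)) (μ : Multiset ℕ) :
    |ch (l ∘ σ) μ| = |ch l μ| := by
  rw [ch_perm, abs_mul]
  rcases Int.units_eq_one_or (Equiv.Perm.sign σ) with h | h <;> simp [h]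

/-- base nonnegativity -/
lemma ch_zero_nonneg {n : ℕ} (l : Fin n → ℕ) (hl : StrictAnti l) : 0 ≤ ch l 0 := by
  unfold ch
  simp only [PP, Multiset.map_zero, Multiset.prod_zero, one_mul, alt, coeff_sum, coeff_C_mul]
  refine Finset.sum_nonneg fun w _ => ?_
  have h1 : (∏ i : Fin n, (X i : MvPolynomial (Fin n) ℤ) ^ (n - 1 - ((w i : ℕ)))) =
      monomial (Finsupp.equivFunOnFinite.symm fun i => n - 1 - (w i : ℕ)) 1 := by
    rw [monomial_eq, C_1, one_mul, Finsupp.prod_fintype _ _ (by simp)]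
    simp
  rw [h1, coeff_monomial]
  split_ifs with h
  · have h2 : (fun i => n - 1 - (w i : ℕ)) = l := Finsupp.equivFunOnFinite.symm.injective h
    have h3 : StrictMono w := by
      intro i j hij
      have := hl hij
      rw [← h2] at this
      simp only at this
      rw [Fin.lt_def]
      omega
    have h4 : w = 1 := by
      ext i
      have := congrFun (Subsingleton.elim (h3.orderIsoOfSurjective w w.surjective)
        (OrderIso.refl _) ▸ rfl : (h3.orderIsoOfSurjective w w.surjective : Fin n → Fin n) = (OrderIso.refl (Fin n))) i
      simpa using congrArg Fin.val this
    subst h4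
    simp
  · simp

end BC

namespace BC

open MvPolynomial

/-- the derivation sending `x_i` to `x_i^(k+1)` -/
noncomputable def Dk (n k : ℕ) : Derivation ℤ (MvPolynomial (Fin n) ℤ) (MvPolynomial (Fin n) ℤ) :=
  mkDerivation ℤ (fun i => X i ^ (k + 1))

/-- Euler operator in one variable -/
noncomputable def Ei (n : ℕ) (i : Fin n) :
    Derivation ℤ (MvPolynomial (Fin n) ℤ) (MvPolynomial (Fin n) ℤ) :=
  mkDerivation ℤ (fun j => if j = i then X i else 0)

/-- the Laplacian -/
noncomputable def Lap (n : ℕ) (f : MvPolynomial (Fin n) ℤ) : MvPolynomial (Fin n) ℤ :=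
  ∑ i, Ei n i (Ei n i f)

/-- cut sum -/
noncomputable def cut (n k : ℕ) : MvPolynomial (Fin n) ℤ :=
  ∑ i ∈ Finset.Ico 1 k, psm n i * psm n (k - i)

lemma coeff_Ei {n : ℕ} (i : Fin n) (f : MvPolynomial (Fin n) ℤ) (m : Fin n →₀ ℕ) :
    coeff m (Ei n i f) = (m i : ℤ) * coeff m f := by
  have h : ∀ f, Ei n i f = X i * pderiv i f := by
    intro f
    have : Ei n i = (X i : MvPolynomial (Fin n) ℤ) • (pderiv i) := by
      apply derivation_ext
      intro j
      simp only [Ei, mkDerivation_X, Derivation.smul_apply, smul_eq_mul, pderiv_X]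
      by_cases hj : j = i
      · subst hj; simp
      · simp [hj]
    rw [this]; simp
  rw [h]
  induction f using MvPolynomial.induction_on' with
  | monomial u a =>
    rw [X_mul_pderiv_monomial, coeff_smul, coeff_monomial]
    split_ifs with hu
    · subst hu; simp
    · simp
  | add p q hp hq => simp only [map_add, mul_add, coeff_add, hp, hq]

lemma coeff_Lap {n : ℕ} (f : MvPolynomial (Fin n) ℤ) (m : Fin n →₀ ℕ) :
    coeff m (Lap n f) = (∑ i, (m i : ℤ) ^ 2) * coeff m f := by
  simp only [Lap, coeff_sum, coeff_Ei, Finset.sum_mul]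
  exact Finset.sum_congr rfl fun i _ => by ring

lemma Dk_eq {n : ℕ} (k : ℕ) (f : MvPolynomial (Fin n) ℤ) :
    Dk n k f = ∑ i, X i ^ k * Ei n i f := by
  have hs : ∀ f, (∑ i, (X i ^ k : MvPolynomial (Fin n) ℤ) • Ei n i) f = ∑ i, X i ^ k * Ei n i f := by
    intro f
    have := map_sum (Derivation.coeFnAddMonoidHom (R := ℤ) (A := MvPolynomial (Fin n) ℤ)
      (M := MvPolynomial (Fin n) ℤ)) (fun i => (X i ^ k : MvPolynomial (Fin n) ℤ) • Ei n i) Finset.univ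
    have h2 := congrFun this f
    simp only [Finset.sum_apply] at h2
    exact h2
  have : Dk n k = ∑ i, (X i ^ k : MvPolynomial (Fin n) ℤ) • Ei n i := by
    apply derivation_ext
    intro j
    rw [hs]
    simp only [Dk, Ei, mkDerivation_X]
    simp [pow_succ]
  rw [this, hs]

lemma Ei_psm {n : ℕ} (i : Fin n) (k : ℕ) : Ei n i (psm n k) = (k : MvPolynomial (Fin n) ℤ) * X i ^ k := by
  have h : ∀ j, Ei n i (X j ^ k) = if j = i then (k : MvPolynomial (Fin n) ℤ) * X i ^ k else 0 := by
    intro j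
    rw [Derivation.leibniz_pow]
    simp only [Ei, mkDerivation_X]
    split_ifs with hj
    · subst hj
      cases k with
      | zero => simp
      | succ k => simp [pow_succ]
    · simp
  simp [psm, h]

lemma Dk_psm {n : ℕ} (j k : ℕ) : Dk n j (psm n k) = (k : MvPolynomial (Fin n) ℤ) * psm n (j + k) := by
  rw [Dk_eq]
  simp only [Ei_psm]
  simp only [psm, Finset.mul_sum]
  exact Finset.sum_congr rfl fun i _ => by ring

lemma Lap_psm_mul {n : ℕ} (k : ℕ) (g : MvPolynomial (Fin n) ℤ) :
    Lap n (psm n k * g) = psm n k * Lap n g + 2 * (k : MvPolynomial (Fin n) ℤ) * Dk n k g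
      + (k : MvPolynomial (Fin n) ℤ) ^ 2 * psm n k * g := by
  have h : ∀ i, Ei n i (Ei n i (psm n k * g)) =
      psm n k * Ei n i (Ei n i g) + 2 * (k : MvPolynomial (Fin n) ℤ) * (X i ^ k * Ei n i g) + (k : MvPolynomial (Fin n) ℤ) ^ 2 * X i ^ k * g := by
    intro i
    have hX : Ei n i (X i ^ k) = (k : MvPolynomial (Fin n) ℤ) * X i ^ k := by
      rw [Derivation.leibniz_pow]
      simp only [Ei, mkDerivation_X]
      cases k with
      | zero => simp
      | succ k => simp [pow_succ]
    have hk : Ei n i (k : MvPolynomial (Fin n) ℤ) = 0 := by simp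
    simp only [Derivation.leibniz, smul_eq_mul, map_add, Ei_psm, hX, hk]
    ring
  simp only [Lap, h, Finset.sum_add_distrib, ← Finset.mul_sum, ← Finset.sum_mul]
  rw [Dk_eq]
  rfl

/-- two-variable complete homogeneous polynomial -/
noncomputable def hh {n : ℕ} (k : ℕ) (a b : Fin n) : MvPolynomial (Fin n) ℤ :=
  ∑ t ∈ Finset.range (k + 1), X a ^ t * X b ^ (k - t)

lemma hh_comm {n : ℕ} (k : ℕ) (a b : Fin n) : hh k a b = hh k b a := by
  unfold hh
  rw [← Finset.sum_range_reflect]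
  refine Finset.sum_congr rfl fun t ht => ?_
  have : t < k + 1 := Finset.mem_range.mp ht
  rw [mul_comm]
  congr 2
  omega

lemma hh_self {n : ℕ} (k : ℕ) (a : Fin n) : hh k a a = (k + 1 : MvPolynomial (Fin n) ℤ) * X a ^ k := by
  unfold hh
  rw [Finset.sum_congr rfl (g := fun _ => (X a : MvPolynomial (Fin n) ℤ) ^ k)]
  · simp
  · intro t ht
    have : t < k + 1 := Finset.mem_range.mp ht
    rw [← pow_add]; congr 1; omega

lemma Dk_prod {n k : ℕ} {ι : Type*} (s : Finset ι) (u v : ι → Fin n) :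
    Dk n k (∏ x ∈ s, (X (u x) - X (v x))) =
      (∑ x ∈ s, hh k (u x) (v x)) * ∏ x ∈ s, (X (u x) - X (v x)) := by
  classical
  induction s using Finset.induction_on with
  | empty => simp
  | insert a s ha ih =>
    rw [Finset.prod_insert ha, Finset.sum_insert ha, Derivation.leibniz, ih]
    have h1 : Dk n k (X (u a) - X (v a)) = hh k (u a) (v a) * (X (u a) - X (v a)) := by
      simp only [Dk, map_sub, mkDerivation_X]
      rw [hh]
      exact ((Commute.all (X (u a)) (X (v a))).geom_sum₂_mul (k + 1)).symm
    rw [h1]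
    simp only [smul_eq_mul]
    ring

lemma alt_eq (n : ℕ) : alt n = ∏ x ∈ (Finset.univ : Finset (Fin n)).sigma (fun i => Finset.Ioi i),
    (X (Fin.rev x.2) - X (Fin.rev x.1)) := by
  have h1 : alt n = (Matrix.of fun i j : Fin n => (X j : MvPolynomial (Fin n) ℤ) ^ (n - 1 - (i : ℕ))).det := by
    rw [Matrix.det_apply']
    simp only [alt, Matrix.of_apply]
    exact Finset.sum_congr rfl fun w _ => by simp
  have h2 : (Matrix.of fun i j : Fin n => (X j : MvPolynomial (Fin n) ℤ) ^ (n - 1 - (i : ℕ))) =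
      ((Matrix.vandermonde (fun i : Fin n => (X (Fin.rev i) : MvPolynomial (Fin n) ℤ))).transpose).submatrix
        Fin.revPerm Fin.revPerm := by
    ext1 i j
    simp only [Matrix.of_apply, Matrix.submatrix_apply, Matrix.transpose_apply, Matrix.vandermonde_apply]
    simp only [Fin.revPerm_apply, Fin.rev_rev, Fin.val_rev]
    congr 1
    omega
  rw [h1, h2, Matrix.det_submatrix_equiv_self, Matrix.det_transpose, Matrix.det_vandermonde]
  rw [Finset.prod_sigma]

lemma sum_pairs {n k : ℕ} : 2 * ∑ x ∈ (Finset.univ : Finset (Fin n)).sigma (fun i => Finset.Ioi i),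
      hh k (Fin.rev x.2) (Fin.rev x.1)
    = ∑ a, ∑ b, hh k (n := n) a b - ∑ a, hh k (n := n) a a := by
  rw [Finset.sum_sigma]
  simp only
  have h1 : ∑ a, ∑ b, hh k (n := n) a b = ∑ a, ∑ b, hh k (n := n) (Fin.rev a) (Fin.rev b) := by
    rw [← Equiv.sum_comp Fin.revPerm]
    refine Finset.sum_congr rfl fun a _ => ?_
    rw [← Equiv.sum_comp Fin.revPerm]
    rfl
  have h2 : ∑ a, hh k (n := n) a a = ∑ a, hh k (n := n) (Fin.rev a) (Fin.rev a) := by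
    rw [← Equiv.sum_comp Fin.revPerm]
    rfl
  have h3 : ∀ a : Fin n, ∑ b, hh k (n := n) (Fin.rev a) (Fin.rev b) =
      ∑ b ∈ Finset.Ioi a, hh k (n := n) (Fin.rev b) (Fin.rev a) +
      ∑ b ∈ Finset.Iio a, hh k (n := n) (Fin.rev a) (Fin.rev b) + hh k (n := n) (Fin.rev a) (Fin.rev a) := by
    intro a
    rw [Finset.sum_congr rfl (fun b _ => hh_comm k (Fin.rev b) (Fin.rev a))]
    have : (Finset.univ : Finset (Fin n)) = insert a ((Finset.Ioi a).disjUnion (Finset.Iio a) (by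
        rw [Finset.disjoint_left]; intro x hx hy
        simp only [Finset.mem_Ioi, Finset.mem_Iio] at hx hy
        exact absurd hx (not_lt.mpr hy.le))) := by
      ext x
      simp only [Finset.mem_univ, Finset.mem_insert, Finset.mem_disjUnion, Finset.mem_Ioi, Finset.mem_Iio, true_iff]
      rcases lt_trichotomy x a with h | h | h <;> simp [h]
    rw [this, Finset.sum_insert (by simp), Finset.sum_disjUnion]
    ring
  have h4 : ∑ a : Fin n, ∑ b ∈ Finset.Iio a, hh k (n := n) (Fin.rev a) (Fin.rev b) =
      ∑ a : Fin n, ∑ b ∈ Finset.Ioi a, hh k (n := n) (Fin.rev b) (Fin.rev a) := by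
    apply Finset.sum_comm'
    intro x y
    simp
  rw [h1, h2, Finset.sum_congr rfl (fun a _ => h3 a), Finset.sum_add_distrib, Finset.sum_add_distrib, h4]
  ring

lemma sum_hh {n k : ℕ} (hk : 1 ≤ k) : ∑ a, ∑ b, hh k (n := n) a b = 2 * n * psm n k + cut n k := by
  have h1 : ∑ a, ∑ b, hh k (n := n) a b = ∑ t ∈ Finset.range (k + 1), psm n t * psm n (k - t) := by
    unfold hh psm
    simp only [Finset.sum_mul_sum]
    rw [Finset.sum_comm]
    simp only [Finset.sum_comm (s := Finset.univ) (t := Finset.range (k + 1))]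
    refine Finset.sum_congr rfl fun t _ => ?_
    rw [Finset.sum_comm]
  have h0 : psm n 0 = n := by simp [psm]
  rw [h1, Finset.sum_range_succ, Finset.range_eq_Ico, Finset.sum_eq_sum_Ico_succ_bot (by omega), cut]
  simp [h0]
  ring

lemma Dk_alt {n k : ℕ} (hk : 1 ≤ k) :
    2 * Dk n k (alt n) = (2 * n * psm n k + cut n k - (k + 1) * psm n k) * alt n := by
  have h1 : Dk n k (alt n) = (∑ x ∈ (Finset.univ : Finset (Fin n)).sigma (fun i => Finset.Ioi i), hh k (Fin.rev x.2) (Fin.rev x.1)) * alt n := by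
    conv_lhs => rw [alt_eq]
    rw [Dk_prod, ← alt_eq]
  rw [h1, ← mul_assoc, sum_pairs, sum_hh hk]
  simp only [hh_self, ← Finset.mul_sum]
  rfl

lemma Lap_alt (n : ℕ) : Lap n (alt n) = C (∑ i : Fin n, ((n - 1 - (i : ℕ) : ℕ) : ℤ) ^ 2) * alt n := by
  ext m
  rw [coeff_Lap, coeff_C_mul]
  by_cases h0 : coeff m (alt n) = 0
  · simp [h0]
  congr 1
  unfold alt at h0
  rw [coeff_sum] at h0
  obtain ⟨w, _, hw⟩ := Finset.exists_ne_zero_of_sum_ne_zero h0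
  have h1 : (∏ i : Fin n, (X i : MvPolynomial (Fin n) ℤ) ^ (n - 1 - ((w i : ℕ)))) =
      monomial (Finsupp.equivFunOnFinite.symm fun i => n - 1 - (w i : ℕ)) 1 := by
    rw [monomial_eq, C_1, one_mul, Finsupp.prod_fintype _ _ (by simp)]
    simp
  rw [h1, coeff_C_mul, coeff_monomial] at hw
  have h2 : (Finsupp.equivFunOnFinite.symm fun i => n - 1 - (w i : ℕ)) = m := by
    by_contra h
    simp [h] at hw
  rw [← h2]
  exact Equiv.sum_comp w (fun i : Fin n => ((n - 1 - (i : ℕ) : ℕ) : ℤ) ^ 2)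

end BC

namespace BC

open MvPolynomial

section ops
variable {A : Type*} [CommRing A]

/-- weighted sum over removing one part -/
def er (F : ℕ → Multiset ℕ → A) (μ : Multiset ℕ) : A :=
  (μ.map fun t : ℕ => (t : A) * F t (μ.erase t)).sum

lemma er_zero (F : ℕ → Multiset ℕ → A) : er F 0 = 0 := by simp [er]

lemma er_cons (F : ℕ → Multiset ℕ → A) (t : ℕ) (μ : Multiset ℕ) :
    er F (t ::ₘ μ) = (t : A) * F t μ + er (fun s ν => F s (t ::ₘ ν)) μ := by
  unfold er
  rw [Multiset.map_cons, Multiset.sum_cons, Multiset.erase_cons_head]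
  congr 2
  refine Multiset.map_congr rfl fun s hs => ?_
  rw [Multiset.erase_cons_tail_of_mem hs]

lemma er_add (F G : ℕ → Multiset ℕ → A) (μ : Multiset ℕ) :
    er (fun s ν => F s ν + G s ν) μ = er F μ + er G μ := by
  simp [er, mul_add, Multiset.sum_map_add]

lemma er_mul (c : A) (F : ℕ → Multiset ℕ → A) (μ : Multiset ℕ) :
    er (fun s ν => c * F s ν) μ = c * er F μ := by
  simp only [er, ← Multiset.sum_map_mul_left]
  congr 1
  exact Multiset.map_congr rfl fun s _ => by ring

lemma er_mul_right (c : A) (F : ℕ → Multiset ℕ → A) (μ : Multiset ℕ) :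
    er (fun s ν => F s ν * c) μ = er F μ * c := by
  simp only [mul_comm _ c, er_mul]

/-- Jucys--Murphy type operator -/
def JJ (F : ℕ → Multiset ℕ → A) (j : ℕ) (μ : Multiset ℕ) : A :=
  ∑ b ∈ Finset.Ico 1 j, F b ((j - b) ::ₘ μ) + er (fun t ν => F (j + t) ν) μ

/-- class sum operator -/
def T0 (G : Multiset ℕ → A) (μ : Multiset ℕ) : A :=
  er (fun k ν => ∑ b ∈ Finset.Ico 1 k, G (b ::ₘ (k - b) ::ₘ ν) + er (fun s ν' => G ((k + s) ::ₘ ν')) ν) μ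

/-- class sum operator on marked functions -/
def TT (F : ℕ → Multiset ℕ → A) (j : ℕ) (μ : Multiset ℕ) : A :=
  2 * ∑ b ∈ Finset.Ico 1 j, (b : A) * F b ((j - b) ::ₘ μ) + 2 * (j : A) * er (fun t ν => F (j + t) ν) μ
    + T0 (F j) μ

lemma T0_cons (G : Multiset ℕ → A) (t : ℕ) (μ : Multiset ℕ) :
    T0 G (t ::ₘ μ) = T0 (fun ν => G (t ::ₘ ν)) μ + (t : A) * ∑ b ∈ Finset.Ico 1 t, G (b ::ₘ (t - b) ::ₘ μ)
      + 2 * (t : A) * er (fun s ν => G ((t + s) ::ₘ ν)) μ := by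
  unfold T0
  rw [er_cons]
  simp only [er_cons, er_add, er_mul, Multiset.cons_swap t, add_comm t]
  ring

/-- difference term -/
def NN (t : ℕ) (F : ℕ → Multiset ℕ → A) (j : ℕ) (μ : Multiset ℕ) : A :=
  2 * (j : A) * (t : A) * F (j + t) μ + (t : A) * ∑ b ∈ Finset.Ico 1 t, F j (b ::ₘ (t - b) ::ₘ μ)
    + 2 * (t : A) * er (fun s ν => F j ((t + s) ::ₘ ν)) μ

lemma JJ_cons (F : ℕ → Multiset ℕ → A) (t j : ℕ) (μ : Multiset ℕ) :
    JJ F j (t ::ₘ μ) = JJ (fun i ν => F i (t ::ₘ ν)) j μ + (t : A) * F (j + t) μ := by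
  unfold JJ
  simp only [er_cons, Multiset.cons_swap t]
  ring

lemma TT_cons (F : ℕ → Multiset ℕ → A) (t j : ℕ) (μ : Multiset ℕ) :
    TT F j (t ::ₘ μ) = TT (fun i ν => F i (t ::ₘ ν)) j μ + NN t F j μ := by
  unfold TT NN
  simp only [er_cons, T0_cons, Multiset.cons_swap t]
  ring

lemma NN_cons (F : ℕ → Multiset ℕ → A) (s t j : ℕ) (μ : Multiset ℕ) :
    NN t F j (s ::ₘ μ) = NN t (fun i ν => F i (s ::ₘ ν)) j μ + 2 * (s : A) * (t : A) * F j ((t + s) ::ₘ μ) := by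
  unfold NN
  simp only [er_cons, Multiset.cons_swap s]
  ring

lemma JJ_add (F G : ℕ → Multiset ℕ → A) (j : ℕ) (μ : Multiset ℕ) :
    JJ (fun i ν => F i ν + G i ν) j μ = JJ F j μ + JJ G j μ := by
  simp only [JJ, Finset.sum_add_distrib, er_add]; ring

lemma JJ_mul (c : A) (G : ℕ → Multiset ℕ → A) (j : ℕ) (μ : Multiset ℕ) :
    JJ (fun i ν => c * G i ν) j μ = c * JJ G j μ := by
  simp only [JJ, ← Finset.mul_sum, er_mul]; ring

lemma T0_add (F G : Multiset ℕ → A) (μ : Multiset ℕ) :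
    T0 (fun ν => F ν + G ν) μ = T0 F μ + T0 G μ := by
  simp only [T0, Finset.sum_add_distrib, er_add]; ring

lemma T0_mul (c : A) (G : Multiset ℕ → A) (μ : Multiset ℕ) :
    T0 (fun ν => c * G ν) μ = c * T0 G μ := by
  simp only [T0, ← Finset.mul_sum, er_mul, er_add]; ring

lemma TT_add (F G : ℕ → Multiset ℕ → A) (j : ℕ) (μ : Multiset ℕ) :
    TT (fun i ν => F i ν + G i ν) j μ = TT F j μ + TT G j μ := by
  simp only [TT, Finset.sum_add_distrib, er_add, T0_add, mul_add]; ring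

lemma TT_mul (c : A) (G : ℕ → Multiset ℕ → A) (j : ℕ) (μ : Multiset ℕ) :
    TT (fun i ν => c * G i ν) j μ = c * TT G j μ := by
  simp only [TT, er_mul, T0_mul, mul_left_comm _ c, ← Finset.mul_sum]; ring

lemma NN_add (t : ℕ) (F G : ℕ → Multiset ℕ → A) (j : ℕ) (μ : Multiset ℕ) :
    NN t (fun i ν => F i ν + G i ν) j μ = NN t F j μ + NN t G j μ := by
  simp only [NN, Finset.sum_add_distrib, er_add]; ring

lemma NN_mul (t : ℕ) (c : A) (G : ℕ → Multiset ℕ → A) (j : ℕ) (μ : Multiset ℕ) :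
    NN t (fun i ν => c * G i ν) j μ = c * NN t G j μ := by
  simp only [NN, er_mul, ← Finset.mul_sum]; ring

lemma NN_shift (s t : ℕ) (F : ℕ → Multiset ℕ → A) (j : ℕ) (μ : Multiset ℕ) :
    NN t F (j + s) μ = NN t (fun i ν => F (i + s) ν) j μ + 2 * (s : A) * (t : A) * F (j + s + t) μ := by
  simp only [NN, add_right_comm j t s]
  push_cast
  ring

lemma sum_Ico_split (f : ℕ → A) (j t : ℕ) (hj : 1 ≤ j) :
    ∑ b ∈ Finset.Ico 1 (j + t), f b = ∑ b ∈ Finset.Ico 1 j, f b + ∑ b ∈ Finset.Ico 0 t, f (j + b) := by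
  rw [← Finset.sum_Ico_consecutive f hj (Nat.le_add_right j t), Finset.sum_Ico_add]
  simp [add_comm]

lemma sum_Ico_sym (f : ℕ → A) (j : ℕ) :
    ∑ b ∈ Finset.Ico 1 j, f b = ∑ b ∈ Finset.Ico 1 j, f (j - b) := by
  refine Finset.sum_nbij' (fun b => j - b) (fun b => j - b) ?_ ?_ ?_ ?_ ?_ <;>
    simp only [Finset.mem_Ico] <;> intro b hb
  · omega
  · omega
  · omega
  · omega
  · congr 1; omega

lemma comm2_base (F : ℕ → Multiset ℕ → A) (t j : ℕ) (hj : 1 ≤ j) :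
    JJ (NN t F) j 0 + t * TT F (j + t) 0 = t * TT (fun i ν => F (i + t) ν) j 0 + NN t (JJ F) j 0 := by
  have e1 : JJ (NN t F) j 0 = ∑ b ∈ Finset.Ico 1 j, (2 * (b : A) * (t : A) * F (b + t) ((j - b) ::ₘ 0)
      + (t : A) * ∑ c ∈ Finset.Ico 1 t, F b (c ::ₘ (t - c) ::ₘ (j - b) ::ₘ 0)
      + 2 * (t : A) * (((j - b : ℕ) : A) * F b ((j + t - b) ::ₘ 0))) := by
    simp only [JJ, er_zero, add_zero]
    refine Finset.sum_congr rfl fun b hb => ?_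
    simp only [NN, er_cons, er_zero, add_zero]
    rw [show t + (j - b) = j + t - b by have := Finset.mem_Ico.mp hb; omega]
  have e2 : TT F (j + t) 0 = 2 * ∑ b ∈ Finset.Ico 1 (j + t), (b : A) * F b ((j + t - b) ::ₘ 0) := by
    simp [TT, er_zero, T0]
  have e3 : TT (fun i ν => F (i + t) ν) j 0 = 2 * ∑ b ∈ Finset.Ico 1 j, (b : A) * F (b + t) ((j - b) ::ₘ 0) := by
    simp [TT, er_zero, T0]
  have e4 : NN t (JJ F) j 0 = 2 * (j : A) * (t : A) * ∑ b ∈ Finset.Ico 1 (j + t), F b ((j + t - b) ::ₘ 0)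
      + (t : A) * ∑ c ∈ Finset.Ico 1 t, (∑ b ∈ Finset.Ico 1 j, F b ((j - b) ::ₘ c ::ₘ (t - c) ::ₘ 0)
        + ((c : A) * F (j + c) ((t - c) ::ₘ 0) + ((t - c : ℕ) : A) * F (j + (t - c)) (c ::ₘ 0))) := by
    simp only [NN, JJ, er_cons, er_zero, add_zero, mul_zero]
  have e5 : ∑ c ∈ Finset.Ico 1 t, ((t - c : ℕ) : A) * F (j + (t - c)) (c ::ₘ 0) =
      ∑ c ∈ Finset.Ico 1 t, (c : A) * F (j + c) ((t - c) ::ₘ 0) := by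
    rw [sum_Ico_sym]
    refine Finset.sum_congr rfl fun c hc => ?_
    have := Finset.mem_Ico.mp hc
    rw [show t - (t - c) = c by omega]
  have e6 : ∑ c ∈ Finset.Ico 1 t, ∑ b ∈ Finset.Ico 1 j, F b ((j - b) ::ₘ c ::ₘ (t - c) ::ₘ 0) =
      ∑ b ∈ Finset.Ico 1 j, ∑ c ∈ Finset.Ico 1 t, F b (c ::ₘ (t - c) ::ₘ (j - b) ::ₘ 0) := by
    rw [Finset.sum_comm]
    refine Finset.sum_congr rfl fun b _ => Finset.sum_congr rfl fun c _ => ?_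
    rw [Multiset.cons_swap (j - b) c, Multiset.cons_swap (j - b)]
  have e7 : ∑ b ∈ Finset.Ico 1 j, ((j - b : ℕ) : A) * F b ((j + t - b) ::ₘ 0) =
      (j : A) * ∑ b ∈ Finset.Ico 1 j, F b ((j + t - b) ::ₘ 0) -
        ∑ b ∈ Finset.Ico 1 j, (b : A) * F b ((j + t - b) ::ₘ 0) := by
    rw [Finset.mul_sum, ← Finset.sum_sub_distrib]
    refine Finset.sum_congr rfl fun b hb => ?_
    have := Finset.mem_Ico.mp hb
    rw [Nat.cast_sub (by omega)]
    ring
  have e8 : ∑ b ∈ Finset.Ico 0 t, ((j + b : ℕ) : A) * F (j + b) ((j + t - (j + b)) ::ₘ 0) =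
      (j : A) * ∑ b ∈ Finset.Ico 0 t, F (j + b) ((j + t - (j + b)) ::ₘ 0) +
      ∑ c ∈ Finset.Ico 1 t, (c : A) * F (j + c) ((t - c) ::ₘ 0) := by
    have : ∑ c ∈ Finset.Ico 1 t, (c : A) * F (j + c) ((t - c) ::ₘ 0) =
        ∑ c ∈ Finset.Ico 0 t, (c : A) * F (j + c) ((t - c) ::ₘ 0) := by
      rcases Nat.eq_zero_or_pos t with h | h
      · subst h; simp
      · rw [Finset.sum_eq_sum_Ico_succ_bot h]; simp
    rw [this, Finset.mul_sum, ← Finset.sum_add_distrib]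
    refine Finset.sum_congr rfl fun b hb => ?_
    rw [show j + t - (j + b) = t - b by omega]
    push_cast
    ring
  have e9 : ∑ b ∈ Finset.Ico 1 j, (b : A) * ((t : A) * F (b + t) ((j - b) ::ₘ 0)) =
      (t : A) * ∑ b ∈ Finset.Ico 1 j, (b : A) * F (b + t) ((j - b) ::ₘ 0) := by
    rw [Finset.mul_sum]
    exact Finset.sum_congr rfl fun b _ => by ring
  rw [e1, e2, e3, e4]
  simp only [Finset.sum_add_distrib, e5, e6, sum_Ico_split _ j t hj, mul_assoc, ← Finset.mul_sum, e7, e8, e9]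
  ring

lemma comm2 (t : ℕ) (μ : Multiset ℕ) : ∀ (F : ℕ → Multiset ℕ → A) (j : ℕ) (_ : 1 ≤ j),
    JJ (NN t F) j μ + t * TT F (j + t) μ = t * TT (fun i ν => F (i + t) ν) j μ + NN t (JJ F) j μ := by
  induction μ using Multiset.induction_on with
  | empty => intro F j hj; exact comm2_base F t j hj
  | cons s μ ih =>
    intro F j hj
    have h := ih (fun i ν => F i (s ::ₘ ν)) j hj
    simp only [JJ_cons, TT_cons, NN_cons, JJ_add, JJ_mul, NN_add, NN_mul]
    simp only [NN_shift]
    push_cast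
    simp only [add_right_comm j s t, add_comm t s, ← add_assoc] at h ⊢
    linear_combination h

lemma twice_sum (g : ℕ → A) (k : ℕ) (hg : ∀ c ∈ Finset.Ico 1 k, g (k - c) = g c) :
    2 * ∑ c ∈ Finset.Ico 1 k, (c : A) * g c = (k : A) * ∑ c ∈ Finset.Ico 1 k, g c := by
  have h : ∑ c ∈ Finset.Ico 1 k, (c : A) * g c = ∑ c ∈ Finset.Ico 1 k, ((k : A) - c) * g c := by
    rw [sum_Ico_sym]
    refine Finset.sum_congr rfl fun c hc => ?_
    rw [hg c hc, Nat.cast_sub (Finset.mem_Ico.mp hc).2.le]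
  rw [two_mul]
  nth_rewrite 2 [h]
  rw [← Finset.sum_add_distrib, Finset.mul_sum]
  exact Finset.sum_congr rfl fun c _ => by ring

lemma sum_tri (G : ℕ → ℕ → A) (j : ℕ) :
    ∑ e ∈ Finset.Ico 1 j, ∑ b ∈ Finset.Ico 1 e, G b (e - b) =
      ∑ b ∈ Finset.Ico 1 j, ∑ c ∈ Finset.Ico 1 (j - b), G b c := by
  rw [Finset.sum_sigma', Finset.sum_sigma']
  refine Finset.sum_nbij' (fun x => ⟨x.2, x.1 - x.2⟩) (fun x => ⟨x.1 + x.2, x.1⟩) ?_ ?_ ?_ ?_ ?_ <;>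
    simp only [Finset.mem_sigma, Finset.mem_Ico] <;> rintro ⟨b, c⟩ hb
  · simp only at hb ⊢; omega
  · simp only at hb ⊢; omega
  · simp only at hb ⊢
    congr 1; omega
  · simp only at hb ⊢
    congr 1; omega
  · trivial

lemma comm_base (F : ℕ → Multiset ℕ → A) (j : ℕ) :
    JJ (TT F) j 0 = TT (JJ F) j 0 := by
  have e1 : JJ (TT F) j 0 = ∑ e ∈ Finset.Ico 1 j, (2 * ∑ b ∈ Finset.Ico 1 e, (b : A) * F b ((e - b) ::ₘ (j - e) ::ₘ 0)
      + 2 * (e : A) * ((j - e : ℕ) * F j 0) +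
        ((j - e : ℕ) : A) * ∑ c ∈ Finset.Ico 1 (j - e), F e (c ::ₘ (j - e - c) ::ₘ 0)) := by
    simp only [JJ, er_zero, add_zero]
    refine Finset.sum_congr rfl fun e he => ?_
    simp only [TT, er_cons, er_zero, T0, add_zero]
    rw [show e + (j - e) = j by have := Finset.mem_Ico.mp he; omega]
  have e2 : TT (JJ F) j 0 = ∑ e ∈ Finset.Ico 1 j, (2 * (e : A) * ∑ b ∈ Finset.Ico 1 e, F b ((e - b) ::ₘ (j - e) ::ₘ 0)
      + 2 * (e : A) * ((j - e : ℕ) * F j 0)) := by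
    simp only [TT, er_zero, T0, add_zero, mul_zero, JJ, er_cons, Finset.mul_sum]
    refine Finset.sum_congr rfl fun e he => ?_
    rw [show e + (j - e) = j by have := Finset.mem_Ico.mp he; omega]
    rw [← Finset.mul_sum]
    ring
  have e3 : ∑ e ∈ Finset.Ico 1 j, ((j - e : ℕ) : A) * ∑ c ∈ Finset.Ico 1 (j - e), F e (c ::ₘ (j - e - c) ::ₘ 0) =
      2 * ∑ e ∈ Finset.Ico 1 j, ∑ b ∈ Finset.Ico 1 e, ((e - b : ℕ) : A) * F b ((e - b) ::ₘ (j - e) ::ₘ 0) := by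
    have h := sum_tri (fun b c => (c : A) * F b (c ::ₘ (j - b - c) ::ₘ 0)) j
    have h' : ∑ e ∈ Finset.Ico 1 j, ∑ b ∈ Finset.Ico 1 e, ((e - b : ℕ) : A) * F b ((e - b) ::ₘ (j - e) ::ₘ 0) =
        ∑ e ∈ Finset.Ico 1 j, ∑ b ∈ Finset.Ico 1 e, ((e - b : ℕ) : A) * F b ((e - b) ::ₘ (j - b - (e - b)) ::ₘ 0) := by
      refine Finset.sum_congr rfl fun e he => Finset.sum_congr rfl fun b hb => ?_
      rw [show j - b - (e - b) = j - e by
        have := Finset.mem_Ico.mp he; have := Finset.mem_Ico.mp hb; omega]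
    rw [h', h, Finset.mul_sum]
    refine Finset.sum_congr rfl fun e _ => ?_
    rw [twice_sum]
    intro c hc
    have := Finset.mem_Ico.mp hc
    rw [Multiset.cons_swap, show j - e - (j - e - c) = c by omega]
  rw [e1, e2, Finset.sum_add_distrib, e3, Finset.mul_sum, ← Finset.sum_add_distrib]
  refine Finset.sum_congr rfl fun e _ => ?_
  rw [add_right_comm]
  congr 1
  rw [← mul_add, ← Finset.sum_add_distrib, mul_assoc]
  congr 1
  rw [Finset.mul_sum]
  refine Finset.sum_congr rfl fun b hb => ?_
  rw [Nat.cast_sub (Finset.mem_Ico.mp hb).2.le]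
  ring

lemma JT_comm (μ : Multiset ℕ) : ∀ (F : ℕ → Multiset ℕ → A) (j : ℕ) (_ : 1 ≤ j),
    JJ (TT F) j μ = TT (JJ F) j μ := by
  induction μ using Multiset.induction_on with
  | empty => intro F j hj; exact comm_base F j
  | cons t μ ih =>
    intro F j hj
    have h := ih (fun i ν => F i (t ::ₘ ν)) j hj
    have h2 := comm2 t μ F j hj
    simp only [JJ_cons, TT_cons, JJ_add, TT_add, TT_mul]
    linear_combination h + h2

end ops

end BC

namespace BC

open MvPolynomial

lemma Dk_PP {n : ℕ} (j : ℕ) (μ : Multiset ℕ) :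
    Dk n j (PP n μ) = er (fun s ν => PP n ((j + s) ::ₘ ν)) μ := by
  induction μ using Multiset.induction_on with
  | empty => simp [er_zero, PP]
  | cons t μ ih =>
    rw [PP_cons, er_cons, Derivation.leibniz, ih, Dk_psm]
    simp only [Multiset.cons_swap _ t, PP_cons n t, er_mul, smul_eq_mul, PP_cons n (j + t)]
    ring

lemma Lap_PP_alt {n : ℕ} (μ : Multiset ℕ) (hμ : ∀ k ∈ μ, 1 ≤ k) :
    Lap n (PP n μ * alt n) = T0 (PP n) μ * alt n +
      C ((2 * n - 1) * (μ.sum : ℤ) + ∑ i : Fin n, ((n - 1 - (i : ℕ) : ℕ) : ℤ) ^ 2) * (PP n μ * alt n) := by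
  induction μ using Multiset.induction_on with
  | empty => simp [T0, er_zero, PP, Lap_alt]
  | cons k μ ih =>
    have ih' := ih (fun t ht => hμ t (Multiset.mem_cons_of_mem ht))
    have hk := hμ k (Multiset.mem_cons_self k μ)
    rw [PP_cons, mul_assoc, Lap_psm_mul, ih', T0_cons, ← Dk_PP, Derivation.leibniz]
    have h1 : T0 (fun ν => PP n (k ::ₘ ν)) μ = psm n k * T0 (PP n) μ := by
      simp only [PP_cons, T0_mul]
    have h2 : ∑ b ∈ Finset.Ico 1 k, PP n (b ::ₘ (k - b) ::ₘ μ) = cut n k * PP n μ := by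
      simp only [PP_cons, cut, Finset.sum_mul, mul_assoc]
    have h3 := Dk_alt (n := n) hk
    rw [h1, h2]
    simp only [smul_eq_mul, Multiset.sum_cons, map_add, map_mul, map_sub, Nat.cast_add, map_natCast, map_one, map_ofNat]
    linear_combination (k : MvPolynomial (Fin n) ℤ) * PP n μ * h3

/-- eigenvalue -/
def ev {n : ℕ} (l : Fin n → ℕ) (d : ℕ) : ℤ :=
  ∑ i, (l i : ℤ) ^ 2 - ((2 * n - 1) * (d : ℤ) + ∑ i : Fin n, ((n - 1 - (i : ℕ) : ℕ) : ℤ) ^ 2)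

/-- linear functional -/
lemma er_linear {A B : Type*} [CommRing A] [CommRing B] (φ : A →+ B) (F : ℕ → Multiset ℕ → A) (μ : Multiset ℕ) :
    φ (er F μ) = er (fun s ν => φ (F s ν)) μ := by
  unfold er
  rw [map_multiset_sum, Multiset.map_map]
  congr 1
  refine Multiset.map_congr rfl fun s _ => ?_
  simp only [Function.comp]
  rw [← nsmul_eq_mul, map_nsmul, nsmul_eq_mul]

lemma T0_linear {A B : Type*} [CommRing A] [CommRing B] (φ : A →+ B) (F : Multiset ℕ → A) (μ : Multiset ℕ) :
    φ (T0 F μ) = T0 (fun ν => φ (F ν)) μ := by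
  unfold T0
  rw [er_linear]
  simp only [map_add, map_sum, er_linear]

lemma T0_ch {n : ℕ} (l : Fin n → ℕ) (μ : Multiset ℕ) (hμ : ∀ k ∈ μ, 1 ≤ k) :
    T0 (ch l) μ = ev l μ.sum * ch l μ := by
  have h := congrArg (coeff (Finsupp.equivFunOnFinite.symm l)) (Lap_PP_alt (n := n) μ hμ)
  rw [coeff_Lap, coeff_add, coeff_C_mul] at h
  have h2 := T0_linear ((coeffAddMonoidHom (Finsupp.equivFunOnFinite.symm l)).comp
    (AddMonoidHom.mulRight (alt n))) (PP n) μ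
  have h3 : coeff (Finsupp.equivFunOnFinite.symm l) (T0 (PP n) μ * alt n) = T0 (ch l) μ := h2
  rw [h3] at h
  change _ * ch l μ = _ + _ * ch l μ at h
  have h4 : ∀ i, (Finsupp.equivFunOnFinite.symm l) i = l i := fun i => rfl
  simp only [h4] at h
  unfold ev
  linear_combination -h

/-- the iterated functions -/
noncomputable def Phi {n : ℕ} (l : Fin n → ℕ) : ℕ → ℕ → Multiset ℕ → ℤ
  | 0 => fun j μ => ch l (j ::ₘ μ)
  | a + 1 => JJ (Phi l a)

lemma er_congr {A : Type*} [CommRing A] (F G : ℕ → Multiset ℕ → A) (μ : Multiset ℕ)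
    (h : ∀ t ∈ μ, F t (μ.erase t) = G t (μ.erase t)) : er F μ = er G μ := by
  unfold er
  congr 1
  exact Multiset.map_congr rfl fun s hs => by rw [h s hs]

lemma sum_erase_add (μ : Multiset ℕ) (t : ℕ) (ht : t ∈ μ) : t + (μ.erase t).sum = μ.sum := by
  rw [← Multiset.sum_cons, Multiset.cons_erase ht]

/-- JJ depends only on same size values -/
lemma JJ_congr {A : Type*} [CommRing A] (F G : ℕ → Multiset ℕ → A) (j : ℕ) (μ : Multiset ℕ) (hj : 1 ≤ j)
    (hμ : ∀ k ∈ μ, 1 ≤ k)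
    (h : ∀ i ν, 1 ≤ i → (∀ k ∈ ν, 1 ≤ k) → i + ν.sum = j + μ.sum → F i ν = G i ν) : JJ F j μ = JJ G j μ := by
  unfold JJ
  congr 1
  · refine Finset.sum_congr rfl fun b hb => h _ _ ?_ ?_ ?_
    · exact (Finset.mem_Ico.mp hb).1
    · intro k hk
      have := Finset.mem_Ico.mp hb
      rcases Multiset.mem_cons.mp hk with h | h
      · omega
      · exact hμ k h
    · have := Finset.mem_Ico.mp hb
      rw [Multiset.sum_cons]; omega
  · refine er_congr _ _ _ fun t ht => h _ _ (by omega) (fun k hk => hμ k (Multiset.mem_of_mem_erase hk)) ?_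
    have := sum_erase_add μ t ht
    omega

lemma TT_Phi {n : ℕ} (l : Fin n → ℕ) (a : ℕ) : ∀ (j : ℕ) (μ : Multiset ℕ), 1 ≤ j → (∀ k ∈ μ, 1 ≤ k) →
    TT (Phi l a) j μ = ev l (j + μ.sum) * Phi l a j μ := by
  induction a with
  | zero =>
    intro j μ hj hμ
    have h := T0_ch l (j ::ₘ μ) (by
      intro k hk
      rcases Multiset.mem_cons.mp hk with h | h
      · omega
      · exact hμ k h)
    rw [T0_cons, Multiset.sum_cons] at h
    unfold TT
    simp only [Phi]
    rw [← h, twice_sum (fun b => ch l (b ::ₘ (j - b) ::ₘ μ)) j]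
    · ring
    · intro c hc
      have := Finset.mem_Ico.mp hc
      rw [Multiset.cons_swap, show j - (j - c) = c by omega]
  | succ a ih =>
    intro j μ hj hμ
    simp only [Phi]
    rw [← JT_comm μ (Phi l a) j hj, ← JJ_mul]
    refine JJ_congr _ _ j μ hj hμ fun i ν hi hν hs => ?_
    rw [ih i ν hi hν, hs]

/-- remove a box -/
def dn {n : ℕ} (l : Fin n → ℕ) (i : Fin n) : Fin n → ℕ := Function.update l i (l i - 1)

lemma ev_dn {n : ℕ} (l : Fin n → ℕ) (i : Fin n) (hi : 1 ≤ l i) (d : ℕ) :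
    ev l (1 + d) - ev (dn l i) d = 2 * ((l i : ℤ) - n) := by
  unfold ev dn
  have h1 : ∀ m : Fin n → ℕ, ∑ x, (m x : ℤ) ^ 2 = (m i : ℤ) ^ 2 + ∑ x ∈ Finset.univ.erase i, (m x : ℤ) ^ 2 :=
    fun m => (Finset.add_sum_erase _ _ (Finset.mem_univ i)).symm
  rw [h1 l, h1 (Function.update l i (l i - 1))]
  have h2 : ∑ x ∈ Finset.univ.erase i, ((Function.update l i (l i - 1) x : ℕ) : ℤ) ^ 2 =
      ∑ x ∈ Finset.univ.erase i, (l x : ℤ) ^ 2 := by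
    refine Finset.sum_congr rfl fun x hx => ?_
    rw [Function.update_of_ne (Finset.ne_of_mem_erase hx)]
  rw [h2, Function.update_self, Nat.cast_sub hi]
  push_cast
  ring

lemma T0_congr {A : Type*} [CommRing A] (F G : Multiset ℕ → A) (μ : Multiset ℕ)
    (hμ : ∀ k ∈ μ, 1 ≤ k) (h : ∀ ν, (∀ k ∈ ν, 1 ≤ k) → F ν = G ν) : T0 F μ = T0 G μ := by
  unfold T0
  refine er_congr _ _ _ fun t ht => ?_
  have hμ' : ∀ k ∈ μ.erase t, 1 ≤ k := fun k hk => hμ k (Multiset.mem_of_mem_erase hk)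
  have ht' := hμ t ht
  congr 1
  · refine Finset.sum_congr rfl fun b hb => h _ ?_
    have := Finset.mem_Ico.mp hb
    intro k hk
    rcases Multiset.mem_cons.mp hk with h | h
    · omega
    · rcases Multiset.mem_cons.mp h with h | h
      · omega
      · exact hμ' k h
  · refine er_congr _ _ _ fun s hs => h _ ?_
    intro k hk
    rcases Multiset.mem_cons.mp hk with h | h
    · omega
    · exact hμ' k (Multiset.mem_of_mem_erase h)

lemma T0_sum {A ι : Type*} [CommRing A] (s : Finset ι) (c : ι → A) (G : ι → Multiset ℕ → A) (μ : Multiset ℕ) :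
    T0 (fun ν => ∑ i ∈ s, c i * G i ν) μ = ∑ i ∈ s, c i * T0 (G i) μ := by
  classical
  induction s using Finset.induction_on with
  | empty =>
    simp only [Finset.sum_empty]
    have := T0_mul (0 : A) (fun _ => 0) μ
    simpa using this
  | insert a s ha ih =>
    simp only [Finset.sum_insert ha, T0_add, T0_mul, ih]

lemma Phi_one {n : ℕ} (l : Fin n → ℕ) (a : ℕ) : ∀ (μ : Multiset ℕ), (∀ k ∈ μ, 1 ≤ k) →
    Phi l a 1 μ = ∑ i, if 1 ≤ l i then ((l i : ℤ) - n) ^ a * ch (dn l i) μ else 0 := by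
  induction a with
  | zero =>
    intro μ hμ
    simp only [Phi, pow_zero, one_mul]
    exact ch_cons l 1 μ
  | succ a ih =>
    intro μ hμ
    have h1 := TT_Phi l a 1 μ le_rfl hμ
    have h2 : TT (Phi l a) 1 μ = 2 * Phi l (a + 1) 1 μ + T0 (Phi l a 1) μ := by
      simp [TT, Phi, JJ]
    have h3 : T0 (Phi l a 1) μ = ∑ i, if 1 ≤ l i then ((l i : ℤ) - n) ^ a * (ev (dn l i) μ.sum * ch (dn l i) μ) else 0 := by
      rw [T0_congr _ _ μ hμ ih]
      have := T0_sum Finset.univ (fun i => if 1 ≤ l i then ((l i : ℤ) - n) ^ a else 0)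
        (fun i => ch (dn l i)) μ
      simp only [ite_mul, zero_mul] at this
      rw [this]
      refine Finset.sum_congr rfl fun i _ => ?_
      rw [T0_ch _ _ hμ]
    have h4 : 2 * Phi l (a + 1) 1 μ =
        2 * ∑ i, if 1 ≤ l i then ((l i : ℤ) - n) ^ (a + 1) * ch (dn l i) μ else 0 := by
      have : 2 * Phi l (a + 1) 1 μ = ev l (1 + μ.sum) * Phi l a 1 μ - T0 (Phi l a 1) μ := by
        rw [← h1, h2]; ring
      rw [this, h3, ih μ hμ, Finset.mul_sum, Finset.mul_sum, ← Finset.sum_sub_distrib]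
      refine Finset.sum_congr rfl fun i _ => ?_
      split_ifs with hi
      · have := ev_dn l i hi μ.sum
        rw [pow_succ]
        linear_combination ((l i : ℤ) - n) ^ a * ch (dn l i) μ * this
      · simp
    omega

end BC

namespace BC

/-- shapes in the allowed range -/
structure Good {n : ℕ} (ρ : ℝ) (l : Fin n → ℕ) : Prop where
  anti : StrictAnti l
  ub : ∀ i, (l i : ℝ) ≤ n + ρ
  lb : ∀ m : ℕ, (m : ℝ) < n - ρ → ∃ i, l i = m

/-- dimension -/
noncomputable def fd {n : ℕ} (l : Fin n → ℕ) (d : ℕ) : ℤ := ch l (Multiset.replicate d 1)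

lemma dn_anti {n : ℕ} {l : Fin n → ℕ} (hl : StrictAnti l) (i : Fin n) (_hi : 1 ≤ l i)
    (hinj : Function.Injective (dn l i)) : StrictAnti (dn l i) := by
  intro a b hab
  have h1 := hl hab
  have h2 : dn l i a ≠ dn l i b := fun h => hab.ne (hinj h)
  unfold dn at *
  by_cases ha : a = i
  · subst ha
    rw [Function.update_self, Function.update_of_ne hab.ne'] at *
    omega
  · by_cases hb : b = i
    · subst hb
      rw [Function.update_self, Function.update_of_ne hab.ne] at *
      omega
    · rw [Function.update_of_ne ha, Function.update_of_ne hb]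
      exact h1

lemma fd_succ {n : ℕ} (l : Fin n → ℕ) (d : ℕ) :
    fd l (d + 1) = ∑ i, if 1 ≤ l i then fd (dn l i) d else 0 := by
  unfold fd
  rw [Multiset.replicate_succ]
  exact ch_cons l 1 _

lemma fd_nonneg {n : ℕ} (d : ℕ) : ∀ (l : Fin n → ℕ), StrictAnti l → 0 ≤ fd l d := by
  induction d with
  | zero => intro l hl; exact ch_zero_nonneg l hl
  | succ d ih =>
    intro l hl
    rw [fd_succ]
    refine Finset.sum_nonneg fun i _ => ?_
    split_ifs with hi
    · by_cases h : Function.Injective (dn l i)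
      · exact ih _ (dn_anti hl i hi h)
      · exact (ch_eq_zero _ _ h).ge
    · exact le_rfl

lemma dn_no {n : ℕ} {l : Fin n → ℕ} (i : Fin n) (hi : 1 ≤ l i)
    (hinj : Function.Injective (dn l i)) (k : Fin n) : l k ≠ l i - 1 := by
  intro h
  have hk : k ≠ i := by rintro rfl; omega
  apply hk
  apply hinj
  unfold dn
  rw [Function.update_self, Function.update_of_ne hk, h]

lemma Good.cont {n : ℕ} {ρ : ℝ} {l : Fin n → ℕ} (hl : Good ρ l) (i : Fin n) (hi : 1 ≤ l i)
    (hinj : Function.Injective (dn l i)) : |(l i : ℝ) - n| ≤ ρ := by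
  rw [abs_le]
  constructor
  · by_contra h
    push Not at h
    obtain ⟨k, hk⟩ := hl.lb (l i - 1) (by rw [Nat.cast_sub hi]; push_cast; linarith)
    exact dn_no i hi hinj k hk
  · have := hl.ub i; linarith

lemma Good.dn {n : ℕ} {ρ : ℝ} {l : Fin n → ℕ} (hl : Good ρ l) (i : Fin n) (hi : 1 ≤ l i)
    (hinj : Function.Injective (dn l i)) : Good ρ (dn l i) := by
  refine ⟨dn_anti hl.anti i hi hinj, ?_, ?_⟩
  · intro j
    have := hl.ub j
    by_cases hj : j = i
    · subst hj
      unfold BC.dn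
      rw [Function.update_self, Nat.cast_sub hi]; push_cast; linarith
    · unfold BC.dn
      rw [Function.update_of_ne hj]; exact this
  · intro m hm
    obtain ⟨j, hj⟩ := hl.lb m hm
    have hji : j ≠ i := by
      rintro rfl
      obtain ⟨k, hk⟩ := hl.lb (l j - 1) (by rw [hj, Nat.cast_sub (by omega)]; push_cast; linarith)
      exact dn_no j hi hinj k hk
    exact ⟨j, by unfold BC.dn; rw [Function.update_of_ne hji, hj]⟩

lemma er_append {A : Type*} [CommRing A] (ν : Multiset ℕ) : ∀ (F : ℕ → Multiset ℕ → A) (μ : Multiset ℕ),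
    er F (ν + μ) = er (fun t ν' => F t (ν' + μ)) ν + er (fun t μ' => F t (ν + μ')) μ := by
  induction ν using Multiset.induction_on with
  | empty => intro F μ; simp [er_zero]
  | cons t ν ih =>
    intro F μ
    rw [Multiset.cons_add, er_cons, er_cons, ih]
    simp only [Multiset.cons_add]
    ring

lemma er_ones {A : Type*} [CommRing A] (F : ℕ → Multiset ℕ → A) (m : ℕ) :
    er F (Multiset.replicate (m + 1) 1) = (m + 1) * F 1 (Multiset.replicate m 1) := by
  unfold er
  rw [Multiset.map_replicate, Multiset.sum_replicate, Multiset.replicate_succ, Multiset.erase_cons_head]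
  simp

lemma er_abs_le (F : ℕ → Multiset ℕ → ℝ) (ν : Multiset ℕ) (b : ℕ → ℝ)
    (h : ∀ t ∈ ν, |F t (ν.erase t)| ≤ b t) : |er F ν| ≤ (ν.map fun t : ℕ => (t : ℝ) * b t).sum := by
  unfold er
  refine (Multiset.abs_sum_le_sum_abs (s := _)).trans ?_
  rw [Multiset.map_map]
  refine Multiset.sum_map_le_sum_map _ _ fun t ht => ?_
  simp only [Function.comp, abs_mul, Nat.abs_cast]
  exact mul_le_mul_of_nonneg_left (h t ht) (Nat.cast_nonneg _)

/-- weight of a multiset -/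
noncomputable def BB (β : ℕ → ℝ) (ν : Multiset ℕ) : ℝ := (ν.map β).prod

/-- key inequality -/
def KI (ρ : ℝ) (β : ℕ → ℝ) (q K : ℕ) : Prop :=
  ∀ (j : ℕ) (ν : Multiset ℕ), 1 ≤ j → (∀ k ∈ ν, 2 ≤ k) → j + ν.sum ≤ K →
    ρ * β j + ∑ b ∈ Finset.Ico 1 j, β b * β (j - b) + (ν.map fun t : ℕ => (t : ℝ) * (β (j + t) / β t)).sum
      ≤ q * β (j + 1)

lemma BB_cons (β : ℕ → ℝ) (t : ℕ) (ν : Multiset ℕ) : BB β (t ::ₘ ν) = β t * BB β ν := by simp [BB]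

lemma BB_erase (β : ℕ → ℝ) (hβ : ∀ k, 0 < β k) (t : ℕ) (ν : Multiset ℕ) (ht : t ∈ ν) :
    BB β (ν.erase t) = BB β ν / β t := by
  conv_rhs => rw [← Multiset.cons_erase ht, BB_cons]
  rw [mul_div_cancel_left₀ _ (hβ t).ne']

lemma BB_pos (β : ℕ → ℝ) (hβ : ∀ k, 0 < β k) (ν : Multiset ℕ) : 0 < BB β ν := by
  unfold BB
  apply Multiset.prod_pos
  intro x hx
  obtain ⟨k, _, rfl⟩ := Multiset.mem_map.mp hx
  exact hβ k

/-- main bound at level d -/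
def MB (n : ℕ) (ρ : ℝ) (β : ℕ → ℝ) (q K d : ℕ) : Prop :=
  ∀ (l : Fin n → ℕ) (ν : Multiset ℕ) (s : ℕ), Good ρ l → (∀ k ∈ ν, 2 ≤ k) → ν.sum ≤ K → q ≤ s →
    ν.sum + s = d → |(ch l (ν + Multiset.replicate s 1) : ℝ)| ≤ fd l d * BB β ν

lemma Phi_one_bound {n : ℕ} {ρ : ℝ} {β : ℕ → ℝ} (hβ : ∀ k, 0 < β k) {q K d : ℕ} (hM : MB n ρ β q K d)
    (l : Fin n → ℕ) (hl : Good ρ l) (ν : Multiset ℕ) (s a : ℕ) (hν : ∀ k ∈ ν, 2 ≤ k) (hK : ν.sum ≤ K) (hq : q ≤ s)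
    (hd : ν.sum + s = d) :
    |(Phi l a 1 (ν + Multiset.replicate s 1) : ℝ)| ≤ fd l (d + 1) * ρ ^ a * BB β ν := by
  rw [Phi_one l a _ (by
    intro k hk
    rcases Multiset.mem_add.mp hk with h | h
    · have := hν k h; omega
    · rw [Multiset.eq_of_mem_replicate h]), fd_succ]
  push_cast
  rw [Finset.sum_mul, Finset.sum_mul]
  refine (Finset.abs_sum_le_sum_abs _ _).trans (Finset.sum_le_sum fun i _ => ?_)
  split_ifs with hi
  · by_cases hinj : Function.Injective (dn l i)
    · rw [abs_mul, abs_pow]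
      have h1 := hM (dn l i) ν s (hl.dn i hi hinj) hν hK hq hd
      have h2 := pow_le_pow_left₀ (abs_nonneg _) (hl.cont i hi hinj) a
      have h3 : (0 : ℝ) ≤ fd (dn l i) d := by exact_mod_cast fd_nonneg d _ (dn_anti hl.anti i hi hinj)
      calc _ ≤ ρ ^ a * (fd (dn l i) d * BB β ν) := by
            apply mul_le_mul h2 h1 (abs_nonneg _)
            exact le_trans (by positivity) h2
        _ = _ := by ring
    · have h0 : fd (dn l i) d = 0 := ch_eq_zero _ _ hinj
      rw [ch_eq_zero _ _ hinj, h0]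
      simp
  · simp

lemma inner_bound {n : ℕ} {ρ : ℝ} (hρ : 0 ≤ ρ) {β : ℕ → ℝ} (hβ : ∀ k, 0 < β k) (hβ1 : β 1 = 1) {q K d : ℕ}
    (hKI : KI ρ β q K) (hM : MB n ρ β q K d) (l : Fin n → ℕ) (hl : Good ρ l) (κ : ℕ) :
    ∀ (a j s : ℕ) (ν : Multiset ℕ), 1 ≤ j → (∀ k ∈ ν, 2 ≤ k) → j + ν.sum = κ → κ ≤ K → q ≤ s → κ + s = d + 1 →
      |(Phi l a j (ν + Multiset.replicate s 1) : ℝ)| ≤ fd l (d + 1) * ρ ^ a * (β j * BB β ν) := by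
  have hf : (0 : ℝ) ≤ fd l (d + 1) := by exact_mod_cast fd_nonneg _ _ hl.anti
  induction κ using Nat.strong_induction_on with
  | _ κ ih =>
  intro a j s ν hj hν hκ hK hq hd
  obtain rfl | ⟨j, rfl, hj1⟩ : j = 1 ∨ ∃ j', j = j' + 1 ∧ 1 ≤ j' := by
    rcases Nat.lt_or_ge 1 j with h | h
    · exact Or.inr ⟨j - 1, by omega, by omega⟩
    · exact Or.inl (by omega)
  · rw [hβ1, one_mul]
    exact Phi_one_bound hβ hM l hl ν s a hν (by omega) hq (by omega)
  -- expand
  set W : ℝ := fd l (d + 1) * ρ ^ a * BB β ν with hW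
  have hW0 : 0 ≤ W := by have := BB_pos β hβ ν; positivity
  have h1 : (Phi l (a + 1) j (ν + Multiset.replicate (s + 1) 1) : ℝ) =
      ∑ b ∈ Finset.Ico 1 j, (Phi l a b ((j - b) ::ₘ (ν + Multiset.replicate (s + 1) 1)) : ℝ)
      + er (fun t ν' => (Phi l a (j + t) (ν' + Multiset.replicate (s + 1) 1) : ℝ)) ν
      + ((s : ℝ) + 1) * (Phi l a (j + 1) (ν + Multiset.replicate s 1) : ℝ) := by
    simp only [Phi, JJ]
    rw [er_append, er_ones]
    push_cast
    rw [add_assoc]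
    congr 2
    exact er_linear (Int.castAddHom ℝ) _ _
  have h2 : |(Phi l (a + 1) j (ν + Multiset.replicate (s + 1) 1) : ℝ)| ≤ W * (ρ * β j) := by
    refine (ih (κ - 1) (by omega) (a + 1) j (s + 1) ν hj1 hν (by omega) (by omega) (by omega) (by omega)).trans
      (le_of_eq ?_)
    rw [hW]; ring
  have h3 : |∑ b ∈ Finset.Ico 1 j, (Phi l a b ((j - b) ::ₘ (ν + Multiset.replicate (s + 1) 1)) : ℝ)| ≤
      W * ∑ b ∈ Finset.Ico 1 j, β b * β (j - b) := by
    refine (Finset.abs_sum_le_sum_abs _ _).trans ?_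
    rw [Finset.mul_sum]
    refine Finset.sum_le_sum fun b hb => ?_
    have hb' := Finset.mem_Ico.mp hb
    rcases Nat.lt_or_ge 1 (j - b) with h | h
    · rw [← Multiset.cons_add]
      refine (ih (κ - 1) (by omega) a b (s + 1) ((j - b) ::ₘ ν) hb'.1 ?_ ?_ (by omega) (by omega) (by omega)).trans
        (le_of_eq ?_)
      · intro k hk
        rcases Multiset.mem_cons.mp hk with h | h
        · omega
        · exact hν k h
      · rw [Multiset.sum_cons]; omega
      · rw [hW, BB_cons]; ring
    · have hjb : j - b = 1 := by omega
      rw [hjb, ← Multiset.add_cons, ← Multiset.replicate_succ]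
      refine (ih (κ - 2) (by omega) a b (s + 2) ν hb'.1 hν (by omega) (by omega) (by omega) (by omega)).trans
        (le_of_eq ?_)
      rw [hW, hβ1]; ring
  have h4 : |er (fun t ν' => (Phi l a (j + t) (ν' + Multiset.replicate (s + 1) 1) : ℝ)) ν| ≤
      W * (ν.map fun t : ℕ => (t : ℝ) * (β (j + t) / β t)).sum := by
    refine (er_abs_le _ ν (fun t => W * (β (j + t) / β t)) ?_).trans (le_of_eq ?_)
    · intro t ht
      have hs := sum_erase_add ν t ht
      refine (ih (κ - 1) (by omega) a (j + t) (s + 1) (ν.erase t) (by omega)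
        (fun k hk => hν k (Multiset.mem_of_mem_erase hk)) (by omega) (by omega) (by omega) (by omega)).trans
        (le_of_eq ?_)
      rw [BB_erase β hβ t ν ht, hW]; ring
    · rw [← Multiset.sum_map_mul_left]
      congr 1
      exact Multiset.map_congr rfl fun t _ => by ring
  have h5 := hKI j ν hj1 hν (by omega)
  have h6 : ((s : ℝ) + 1) * |(Phi l a (j + 1) (ν + Multiset.replicate s 1) : ℝ)| ≤ W * (((s : ℝ) + 1) * β (j + 1)) := by
    have e : ((s : ℝ) + 1) * (Phi l a (j + 1) (ν + Multiset.replicate s 1) : ℝ) =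
      (Phi l (a + 1) j (ν + Multiset.replicate (s + 1) 1) : ℝ)
      - ∑ b ∈ Finset.Ico 1 j, (Phi l a b ((j - b) ::ₘ (ν + Multiset.replicate (s + 1) 1)) : ℝ)
      - er (fun t ν' => (Phi l a (j + t) (ν' + Multiset.replicate (s + 1) 1) : ℝ)) ν := by
      rw [h1]; ring
    have hs0 : (0 : ℝ) ≤ (s : ℝ) + 1 := by positivity
    rw [← abs_of_nonneg hs0, ← abs_mul, abs_of_nonneg hs0, e]
    refine (abs_sub _ _).trans ((add_le_add_left (abs_sub _ _) _).trans ?_)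
    have h7 : (q : ℝ) * β (j + 1) ≤ ((s : ℝ) + 1) * β (j + 1) := by
      apply mul_le_mul_of_nonneg_right _ (hβ _).le
      have : (q : ℝ) ≤ s := by exact_mod_cast hq
      linarith
    have h8 := mul_le_mul_of_nonneg_left (h5.trans h7) hW0
    linarith
  have hs1 : (0 : ℝ) < (s : ℝ) + 1 := by positivity
  have h9 : ((s : ℝ) + 1) * |(Phi l a (j + 1) (ν + Multiset.replicate s 1) : ℝ)| ≤
      ((s : ℝ) + 1) * (W * β (j + 1)) := h6.trans (le_of_eq (by ring))
  refine (le_of_mul_le_mul_left h9 hs1).trans (le_of_eq ?_)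
  rw [hW]; ring

lemma MB_all {n : ℕ} {ρ : ℝ} (hρ : 0 ≤ ρ) {β : ℕ → ℝ} (hβ : ∀ k, 0 < β k) (hβ1 : β 1 = 1) {q K : ℕ}
    (hKI : KI ρ β q K) (d : ℕ) : MB n ρ β q K d := by
  induction d with
  | zero =>
    intro l ν s hl hν hK hq hd
    have hs : s = 0 := by omega
    have hn : ν = 0 := by
      rw [Multiset.eq_zero_iff_forall_notMem]
      intro k hk
      have := hν k hk
      have := sum_erase_add ν k hk
      omega
    subst hs hn
    have : (0 : ℝ) ≤ fd l 0 := by exact_mod_cast fd_nonneg _ _ hl.anti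
    simp only [BB, Multiset.map_zero, Multiset.prod_zero, mul_one, zero_add]
    exact (abs_of_nonneg this).le
  | succ d ih =>
    intro l ν s hl hν hK hq hd
    by_cases hn : ν = 0
    · subst hn
      simp only [Multiset.sum_zero, zero_add] at hd
      subst hd
      have : (0 : ℝ) ≤ fd l (d + 1) := by exact_mod_cast fd_nonneg _ _ hl.anti
      simp only [BB, Multiset.map_zero, Multiset.prod_zero, mul_one, zero_add]
      exact (abs_of_nonneg this).le
    · obtain ⟨j, hj⟩ := Multiset.exists_mem_of_ne_zero hn
      have hsum := sum_erase_add ν j hj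
      have hj2 := hν j hj
      have h := inner_bound hρ hβ hβ1 hKI ih l hl ν.sum 0 j s (ν.erase j) (by omega)
        (fun k hk => hν k (Multiset.mem_of_mem_erase hk)) hsum hK hq hd
      simp only [Phi] at h
      rw [← Multiset.cons_add, Multiset.cons_erase hj, ← BB_cons, Multiset.cons_erase hj] at h
      simpa using h

end BC

namespace BC

/-- w weights -/
noncomputable def ww (δ : ℝ) (k : ℕ) : ℝ := 1 / (k : ℝ) ^ 2 + δ

/-- beta weights -/
noncomputable def bt (δ θ : ℝ) (k : ℕ) : ℝ := if k ≤ 1 then 1 else 6 * ww δ k * θ ^ (k - 1)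

lemma ww_pos {δ : ℝ} (hδ : 0 < δ) (k : ℕ) : 0 < ww δ k := by unfold ww; positivity

lemma bt_pos {δ θ : ℝ} (hδ : 0 < δ) (hθ : 0 < θ) (k : ℕ) : 0 < bt δ θ k := by
  unfold bt
  have := ww_pos hδ k
  split_ifs <;> positivity

lemma bt_le {δ θ : ℝ} (hδ : 0 < δ) (k : ℕ) (hk : 1 ≤ k) : bt δ θ k ≤ 6 * ww δ k * θ ^ (k - 1) := by
  unfold bt
  split_ifs with h
  · have : k = 1 := by omega
    subst this
    simp [ww]; linarith
  · exact le_rfl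

lemma bt_ge {δ θ : ℝ} {k : ℕ} (hk : 2 ≤ k) : bt δ θ k = 6 * ww δ k * θ ^ (k - 1) := by
  unfold bt
  rw [if_neg (by omega)]

lemma ww_ratio {δ : ℝ} (hδ : 0 < δ) (j : ℕ) (hj : 2 ≤ j) : (4 / 9) * ww δ j ≤ ww δ (j + 1) := by
  unfold ww
  have hj' : (2 : ℝ) ≤ j := by exact_mod_cast hj
  have : 4 / 9 * (1 / (j : ℝ) ^ 2) ≤ 1 / ((j + 1 : ℕ) : ℝ) ^ 2 := by
    push_cast
    rw [← mul_div_assoc, div_le_div_iff₀ (by positivity) (by positivity)]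
    nlinarith
  linarith

lemma bt_ratio {δ θ : ℝ} (hδ : 0 < δ) (hθ : 0 < θ) (j : ℕ) (hj : 1 ≤ j) :
    (4 / 9) * θ * bt δ θ j ≤ bt δ θ (j + 1) := by
  rcases Nat.lt_or_ge 1 j with h | h
  · rw [bt_ge h, bt_ge (by omega)]
    have h1 := ww_ratio hδ j h
    obtain ⟨i, rfl⟩ : ∃ i, j = i + 1 := ⟨j - 1, by omega⟩
    simp only [Nat.add_sub_cancel, pow_succ]
    have : 0 < θ ^ i := by positivity
    calc _ = (4 / 9 * ww δ (i + 1)) * (6 * (θ ^ i * θ)) := by ring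
      _ ≤ ww δ (i + 1 + 1) * (6 * (θ ^ i * θ)) := by gcongr
      _ = _ := by ring
  · have : j = 1 := by omega
    subst this
    rw [bt_ge le_rfl]
    simp only [bt, ww]
    norm_num
    nlinarith [mul_pos hδ hθ]

lemma sum_inv_sq (j : ℕ) : ∑ b ∈ Finset.Ico 1 j, 1 / (b : ℝ) ^ 2 ≤ 2 := by
  have h : ∀ j : ℕ, 1 ≤ j → ∑ b ∈ Finset.Ico 1 (j + 1), 1 / (b : ℝ) ^ 2 ≤ 2 - 1 / (j : ℝ) := by
    intro j hj
    induction j, hj using Nat.le_induction with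
    | base => simp; norm_num
    | succ k hk ih =>
      rw [Finset.sum_Ico_succ_top (by omega)]
      have hk' : (1 : ℝ) ≤ k := by exact_mod_cast hk
      have : 1 / ((k + 1 : ℕ) : ℝ) ^ 2 ≤ 1 / (k : ℝ) - 1 / ((k + 1 : ℕ) : ℝ) := by
        push_cast
        rw [div_sub_div _ _ (by positivity) (by positivity), div_le_div_iff₀ (by positivity) (by positivity)]
        nlinarith
      linarith
  rcases Nat.lt_or_ge 1 j with hj | hj
  · obtain ⟨i, rfl⟩ : ∃ i, j = i + 1 := ⟨j - 1, by omega⟩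
    have := h i (by omega)
    have h2 : (0 : ℝ) ≤ 1 / i := by positivity
    linarith
  · rw [Finset.Ico_eq_empty (by omega)]; simp

lemma sum_ww {δ : ℝ} (hδ : 0 < δ) (j : ℕ) (hj : 2 ≤ j) :
    ∑ b ∈ Finset.Ico 1 j, ww δ b * ww δ (j - b) ≤ 8 / (j : ℝ) ^ 2 + 4 * δ + j * δ ^ 2 := by
  have hj' : (2 : ℝ) ≤ j := by exact_mod_cast hj
  have h1 : ∀ b ∈ Finset.Ico 1 j, ww δ b * ww δ (j - b) ≤
      (2 / (j : ℝ) ^ 2 + δ) * (1 / (b : ℝ) ^ 2) + (2 / (j : ℝ) ^ 2 + δ) * (1 / ((j - b : ℕ) : ℝ) ^ 2) + δ ^ 2 := by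
    intro b hb
    have hb' := Finset.mem_Ico.mp hb
    unfold ww
    have hb1 : (0 : ℝ) < b := by exact_mod_cast hb'.1
    have hb2 : (0 : ℝ) < ((j - b : ℕ) : ℝ) := by exact_mod_cast (by omega : 0 < j - b)
    have hsum : (j : ℝ) = b + ((j - b : ℕ) : ℝ) := by
      rw [Nat.cast_sub hb'.2.le]; ring
    generalize ((j - b : ℕ) : ℝ) = c at *
    have key : 1 / (b : ℝ) ^ 2 * (1 / c ^ 2) ≤ 2 / (j : ℝ) ^ 2 * (1 / (b : ℝ) ^ 2) + 2 / (j : ℝ) ^ 2 * (1 / c ^ 2) := by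
      rw [hsum]
      have : 2 / ((b : ℝ) + c) ^ 2 * (1 / (b : ℝ) ^ 2) + 2 / ((b : ℝ) + c) ^ 2 * (1 / c ^ 2) =
          (2 * ((b : ℝ) ^ 2 + c ^ 2) / ((b : ℝ) + c) ^ 2) * (1 / (b : ℝ) ^ 2 * (1 / c ^ 2)) := by
        field_simp
        ring
      rw [this]
      apply le_mul_of_one_le_left (by positivity)
      rw [one_le_div (by positivity)]
      nlinarith [sq_nonneg ((b : ℝ) - c)]
    nlinarith
  refine (Finset.sum_le_sum h1).trans ?_
  rw [Finset.sum_add_distrib, Finset.sum_add_distrib, ← Finset.mul_sum, ← Finset.mul_sum,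
    ← sum_Ico_sym (fun b => 1 / (b : ℝ) ^ 2) j]
  have h2 := sum_inv_sq j
  have h3 : (0 : ℝ) ≤ 2 / (j : ℝ) ^ 2 + δ := by positivity
  have h4 := mul_le_mul_of_nonneg_left h2 h3
  have h5 : ∑ b ∈ Finset.Ico 1 j, δ ^ 2 ≤ j * δ ^ 2 := by
    rw [Finset.sum_const, nsmul_eq_mul, Nat.card_Ico]
    gcongr
    omega
  have : 8 / (j : ℝ) ^ 2 = 4 * (2 / (j : ℝ) ^ 2) := by ring
  linarith

lemma KI_bt {C : ℝ} (hC : 0 < C) {N R : ℝ} (hN : 0 < N) (hR : 0 < R) (hNR : N ≤ R ^ 2) {ρ : ℝ}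
    (hρ : ρ ≤ C * R) {q K : ℕ} (hK : (K : ℝ) ≤ R) (hq : N / 2 ≤ q) :
    KI ρ (bt (R / N) ((48 + 14 * C) * (R / N))) q K := by
  intro j ν hj hν hs
  set δ := R / N with hδd
  have hδ : 0 < δ := by positivity
  set θ := (48 + 14 * C) * δ with hθd
  have hθ : 0 < θ := by positivity
  have hNδ : N * δ = R := by rw [hδd]; field_simp
  have hb := bt_pos hδ hθ (j + 1)
  have hjR : (j : ℝ) ≤ R := by
    refine le_trans ?_ hK
    exact_mod_cast (by omega : j ≤ K)
  have hw := ww_pos hδ (j + 1)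
  -- (i)
  have h1 : ρ * bt δ θ j ≤ N / 6 * bt δ θ (j + 1) := by
    have h := bt_ratio hδ hθ j hj
    have hp := bt_pos hδ hθ j
    calc ρ * bt δ θ j ≤ C * R * bt δ θ j := by gcongr
      _ ≤ N / 6 * ((4 / 9) * θ * bt δ θ j) := by
        have : C * R ≤ N / 6 * ((4 / 9) * θ) := by
          rw [hθd, ← hNδ]
          have : 0 < N * δ := by positivity
          nlinarith [mul_pos hC this]
        nlinarith
      _ ≤ _ := by gcongr
  -- (ii)
  have h2 : ∑ b ∈ Finset.Ico 1 j, bt δ θ b * bt δ θ (j - b) ≤ N / 6 * bt δ θ (j + 1) := by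
    rcases Nat.lt_or_ge 1 j with hj2 | hj2
    · have hj' : (2 : ℝ) ≤ j := by exact_mod_cast hj2
      have a1 : ∑ b ∈ Finset.Ico 1 j, bt δ θ b * bt δ θ (j - b) ≤
          ∑ b ∈ Finset.Ico 1 j, 36 * θ ^ (j - 2) * (ww δ b * ww δ (j - b)) := by
        refine Finset.sum_le_sum fun b hb => ?_
        have hb' := Finset.mem_Ico.mp hb
        have e : θ ^ (j - 2) = θ ^ (b - 1) * θ ^ (j - b - 1) := by rw [← pow_add]; congr 1; omega
        calc _ ≤ (6 * ww δ b * θ ^ (b - 1)) * (6 * ww δ (j - b) * θ ^ (j - b - 1)) := by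
              apply mul_le_mul (bt_le hδ b hb'.1) (bt_le hδ (j - b) (by omega)) (bt_pos hδ hθ _).le
              have := ww_pos hδ b
              positivity
          _ = _ := by rw [e]; ring
      have a2 := sum_ww hδ j hj2
      have a3 : 8 / (j : ℝ) ^ 2 + 4 * δ + j * δ ^ 2 ≤ 18 * ww δ (j + 1) * (R ^ 2 / N) := by
        have b0 : 1 ≤ R ^ 2 / N := by rw [one_le_div hN]; exact hNR
        have b1 : 8 / (j : ℝ) ^ 2 ≤ 18 * (1 / ((j + 1 : ℕ) : ℝ) ^ 2) := by
          push_cast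
          rw [← mul_div_assoc, div_le_div_iff₀ (by positivity) (by positivity)]
          nlinarith
        have b2 : (j : ℝ) * δ ^ 2 ≤ δ * (R ^ 2 / N) := by
          have : δ * (R ^ 2 / N) = R * δ ^ 2 := by rw [hδd]; field_simp
          rw [this]
          gcongr
        unfold ww
        have b3 : (0 : ℝ) ≤ 1 / ((j + 1 : ℕ) : ℝ) ^ 2 := by positivity
        have b4 : 18 * (1 / ((j + 1 : ℕ) : ℝ) ^ 2) ≤ 18 * (1 / ((j + 1 : ℕ) : ℝ) ^ 2) * (R ^ 2 / N) :=
          le_mul_of_one_le_right (by positivity) b0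
        have b5 : δ ≤ δ * (R ^ 2 / N) := le_mul_of_one_le_right hδ.le b0
        calc _ ≤ 18 * (1 / ((j + 1 : ℕ) : ℝ) ^ 2) * (R ^ 2 / N) + 4 * (δ * (R ^ 2 / N)) + δ * (R ^ 2 / N) := by
              linarith
          _ ≤ _ := by nlinarith
      rw [← Finset.mul_sum] at a1
      have a4 : (0 : ℝ) ≤ 36 * θ ^ (j - 2) := by positivity
      refine a1.trans ((mul_le_mul_of_nonneg_left (a2.trans a3) a4).trans ?_)
      rw [bt_ge (by omega), show j + 1 - 1 = (j - 2) + 2 by omega, pow_add]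
      have a5 : 648 * (R ^ 2 / N) ≤ N * θ ^ 2 := by
        have e1 : R ^ 2 / N = N * δ ^ 2 := by rw [hδd]; field_simp
        rw [e1, hθd, mul_pow]
        have : (648 : ℝ) ≤ (48 + 14 * C) ^ 2 := by nlinarith
        nlinarith [mul_pos hN (pow_pos hδ 2)]
      have a6 : (0 : ℝ) ≤ θ ^ (j - 2) * ww δ (j + 1) := by positivity
      have a7 := mul_le_mul_of_nonneg_left a5 a6
      linarith
    · rw [Finset.Ico_eq_empty (by omega)]
      simp only [Finset.sum_empty]
      positivity
  -- (iii)
  have h3 : (ν.map fun t : ℕ => (t : ℝ) * (bt δ θ (j + t) / bt δ θ t)).sum ≤ N / 6 * bt δ θ (j + 1) := by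
    have a1 : (ν.map fun t : ℕ => (t : ℝ) * (bt δ θ (j + t) / bt δ θ t)).sum ≤
        (ν.map fun t : ℕ => (t : ℝ) * (ww δ (j + 1) * θ ^ j / δ)).sum := by
      refine Multiset.sum_map_le_sum_map _ _ fun t ht => ?_
      have ht2 := hν t ht
      have ht' : (2 : ℝ) ≤ t := by exact_mod_cast ht2
      apply mul_le_mul_of_nonneg_left _ (Nat.cast_nonneg _)
      rw [bt_ge ht2, bt_ge (by omega)]
      have hwt := ww_pos hδ t
      have e : θ ^ (j + t - 1) = θ ^ j * θ ^ (t - 1) := by rw [← pow_add]; congr 1; omega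
      have hθt : 0 < θ ^ (t - 1) := by positivity
      have : 6 * ww δ (j + t) * θ ^ (j + t - 1) / (6 * ww δ t * θ ^ (t - 1)) = ww δ (j + t) * θ ^ j / ww δ t := by
        rw [e]; field_simp
      rw [this]
      have c1 : δ ≤ ww δ t := by
        unfold ww; have : (0 : ℝ) ≤ 1 / (t : ℝ) ^ 2 := by positivity
        linarith
      have c2 : ww δ (j + t) ≤ ww δ (j + 1) := by
        unfold ww
        gcongr
        omega
      gcongr
    have a2 : (ν.map fun t : ℕ => (t : ℝ) * (ww δ (j + 1) * θ ^ j / δ)).sum =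
        (ν.sum : ℝ) * (ww δ (j + 1) * θ ^ j / δ) := by
      rw [Multiset.sum_map_mul_right]
      congr 1
      exact (Nat.cast_multiset_sum ν).symm
    have a3 : (ν.sum : ℝ) ≤ R := le_trans (by exact_mod_cast (by omega : ν.sum ≤ K)) hK
    have a4 : (0 : ℝ) < ww δ (j + 1) * θ ^ j / δ := by positivity
    rw [a2] at a1
    refine a1.trans ((mul_le_mul_of_nonneg_right a3 a4.le).trans (le_of_eq ?_))
    rw [bt_ge (by omega), ← hNδ, Nat.add_sub_cancel]
    field_simp
  have h4 : N / 2 * bt δ θ (j + 1) ≤ q * bt δ θ (j + 1) := by gcongr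
  linarith

lemma BB_bt {δ θ : ℝ} (hδ : 0 < δ) (hδ1 : δ ≤ 1) (hθ : 0 < θ) (ν : Multiset ℕ) (hν : ∀ k ∈ ν, 2 ≤ k) :
    BB (bt δ θ) ν ≤ (8 * θ) ^ (ν.sum - ν.card) ∧ ν.card ≤ ν.sum := by
  induction ν using Multiset.induction_on with
  | empty => simp [BB]
  | cons k ν ih =>
    obtain ⟨h1, h2⟩ := ih (fun t ht => hν t (Multiset.mem_cons_of_mem ht))
    have hk := hν k (Multiset.mem_cons_self k ν)
    have hk' : (2 : ℝ) ≤ k := by exact_mod_cast hk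
    refine ⟨?_, by rw [Multiset.sum_cons, Multiset.card_cons]; omega⟩
    rw [BB_cons, Multiset.sum_cons, Multiset.card_cons,
      show k + ν.sum - (ν.card + 1) = (k - 1) + (ν.sum - ν.card) by omega, pow_add]
    refine mul_le_mul ?_ h1 (BB_pos _ (bt_pos hδ hθ) _).le (by positivity)
    rw [bt_ge hk, mul_pow]
    apply mul_le_mul_of_nonneg_right _ (by positivity)
    have e1 : (8 : ℝ) ≤ 8 ^ (k - 1) := by
      calc (8 : ℝ) = 8 ^ 1 := by norm_num
        _ ≤ 8 ^ (k - 1) := pow_le_pow_right₀ (by norm_num) (by omega)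
    have e2 : 1 / (k : ℝ) ^ 2 ≤ 1 / 4 := by
      apply one_div_le_one_div_of_le <;> nlinarith
    unfold ww
    linarith

end BC

namespace BC

lemma fd_dn_le {n : ℕ} (l : Fin n → ℕ) (hl : Function.Injective l) (i : Fin n) (hi : 1 ≤ l i) (d : ℕ) :
    |fd (dn l i) d| ≤ |fd l (d + 1)| := by
  by_cases hinj : Function.Injective (dn l i)
  swap
  · rw [fd, ch_eq_zero _ _ hinj]; simp
  obtain ⟨σ, hσ⟩ : ∃ σ : Equiv.Perm (Fin n), StrictAnti (l ∘ σ) := by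
    refine ⟨Fin.revPerm.trans (Tuple.sort l), ?_⟩
    have hm : StrictMono (l ∘ Tuple.sort l) :=
      (Tuple.monotone_sort l).strictMono_of_injective (hl.comp (Tuple.sort l).injective)
    intro a b hab
    exact hm (Fin.rev_lt_rev.mpr hab)
  have e : dn (l ∘ σ) (σ.symm i) = dn l i ∘ σ := by
    ext x
    unfold dn
    by_cases hx : x = σ.symm i
    · subst hx; simp
    · have : σ x ≠ i := fun h => hx (by rw [← h]; simp)
      rw [Function.update_of_ne hx]
      simp [Function.comp, Function.update_of_ne this]
  have h1 : |fd (dn l i) d| = |fd (dn (l ∘ σ) (σ.symm i)) d| := by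
    rw [e]; exact (ch_swap_abs _ σ _).symm
  have h2 : |fd l (d + 1)| = |fd (l ∘ σ) (d + 1)| := (ch_swap_abs _ σ _).symm
  have hi' : 1 ≤ (l ∘ σ) (σ.symm i) := by simpa using hi
  have hs : ∀ x, 0 ≤ if 1 ≤ (l ∘ σ) x then fd (dn (l ∘ σ) x) d else 0 := by
    intro x
    split_ifs with hx
    · by_cases h : Function.Injective (dn (l ∘ σ) x)
      · exact fd_nonneg d _ (dn_anti hσ x hx h)
      · exact (ch_eq_zero _ _ h).ge
    · exact le_rfl
  rw [h1, h2, abs_of_nonneg (fd_nonneg _ _ hσ), fd_succ]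
  have h3 := Finset.single_le_sum (fun x _ => hs x) (Finset.mem_univ (σ.symm i))
  have h4 := hs (σ.symm i)
  rw [if_pos hi'] at h3 h4
  rw [abs_of_nonneg h4]
  exact h3

lemma fd_down {n : ℕ} (k : ℕ) : ∀ (l : Fin n → ℕ) (i : Fin n) (d : ℕ), Function.Injective l → k ≤ l i →
    Function.Injective (Function.update l i (l i - k)) →
    |fd (Function.update l i (l i - k)) d| ≤ |fd l (d + k)| := by
  induction k with
  | zero => intro l i d hl hk _; simp
  | succ k ih =>
    intro l i d hl hk hinj
    by_cases h : ∃ j, l j = l i - 1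
    · obtain ⟨j, hj⟩ := h
      have hji : j ≠ i := by rintro rfl; omega
      have hv : ∀ x, x ≠ i → l x ≠ l i - (k + 1) := by
        intro x hx hx'
        apply hx
        apply hinj
        rw [Function.update_self, Function.update_of_ne hx, hx']
      have hk1 : 1 ≤ k := by
        rcases Nat.eq_zero_or_pos k with h0 | h0
        · subst h0; exact absurd hj (hv j hji)
        · exact h0
      have hl'inj : Function.Injective (Function.update l j (l j - k)) := by
        have hvv : ∀ x, x ≠ j → l x ≠ l j - k := by
          intro x _ hx'
          by_cases hx : x = i
          · subst hx; omega
          · exact hv x hx (by omega)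
        intro x y hxy
        by_cases hx : x = j
        · by_cases hy : y = j
          · rw [hx, hy]
          · subst hx
            rw [Function.update_self, Function.update_of_ne hy] at hxy
            exact absurd hxy.symm (hvv y hy)
        · by_cases hy : y = j
          · subst hy
            rw [Function.update_self, Function.update_of_ne hx] at hxy
            exact absurd hxy (hvv x hx)
          · rw [Function.update_of_ne hx, Function.update_of_ne hy] at hxy
            exact hl hxy
      have h1 := ih l j (d + 1) hl (by omega) hl'inj
      set l' := Function.update l j (l j - k) with hl'
      have hl'i : l' i = l i := Function.update_of_ne hji.symm _ _
      have h2 := fd_dn_le l' hl'inj i (by omega) d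
      have h3 : dn l' i = (Function.update l i (l i - (k + 1))) ∘ (Equiv.swap i j) := by
        ext x
        simp only [Function.comp, dn, hl'i]
        by_cases hx : x = i
        · subst hx
          rw [Function.update_self, Equiv.swap_apply_left, Function.update_of_ne hji, hj]
        · by_cases hx' : x = j
          · subst hx'
            rw [Function.update_of_ne hx, Equiv.swap_apply_right, Function.update_self, hl', Function.update_self]
            omega
          · rw [Function.update_of_ne hx, Equiv.swap_apply_of_ne_of_ne hx hx', Function.update_of_ne hx, hl',
              Function.update_of_ne hx']
      have h4 : |fd (dn l' i) d| = |fd (Function.update l i (l i - (k + 1))) d| := by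
        rw [h3]; exact ch_swap_abs _ _ _
      rw [← h4]
      refine h2.trans (h1.trans (le_of_eq ?_))
      congr 2; ring
    · push Not at h
      have hd : Function.Injective (dn l i) := by
        intro x y hxy
        unfold dn at hxy
        by_cases hx : x = i
        · by_cases hy : y = i
          · rw [hx, hy]
          · subst hx
            rw [Function.update_self, Function.update_of_ne hy] at hxy
            exact absurd hxy.symm (h y)
        · by_cases hy : y = i
          · subst hy
            rw [Function.update_self, Function.update_of_ne hx] at hxy
            exact absurd hxy (h x)
          · rw [Function.update_of_ne hx, Function.update_of_ne hy] at hxy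
            exact hl hxy
      have hdi : dn l i i = l i - 1 := Function.update_self _ _ _
      have e : Function.update (dn l i) i (dn l i i - k) = Function.update l i (l i - (k + 1)) := by
        rw [hdi]
        unfold dn
        rw [Function.update_idem]
        congr 1
        omega
      have h1 := ih (dn l i) i d hd (by omega) (by rw [e]; exact hinj)
      rw [e] at h1
      exact h1.trans (fd_dn_le l hl i (by omega) (d + k))

lemma crude {n : ℕ} {ρ : ℝ} (hρ : 0 ≤ ρ) (s : ℕ) (ν : Multiset ℕ) : ∀ (l : Fin n → ℕ), Function.Injective l →
    (∀ m : ℕ, (m : ℝ) < n - ρ → ∃ i, l i = m) → (∀ k ∈ ν, 1 ≤ k) →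
    |(ch l (ν + Multiset.replicate s 1) : ℝ)| ≤ ρ ^ ν.card * |(fd l (ν.sum + s) : ℝ)| := by
  induction ν using Multiset.induction_on with
  | empty => intro l hl hr hν; simp [fd]
  | cons k ν ih =>
    intro l hl hr hν
    have hk := hν k (Multiset.mem_cons_self k ν)
    rw [Multiset.cons_add, ch_cons, Multiset.card_cons, Multiset.sum_cons]
    push_cast
    have hlow : ∀ i, k ≤ l i → Function.Injective (Function.update l i (l i - k)) → (n : ℝ) - ρ ≤ l i := by
      intro i hki hinj
      by_contra h
      push Not at h
      obtain ⟨x, hx⟩ := hr (l i - k) (lt_of_le_of_lt (by exact_mod_cast Nat.sub_le _ _) h)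
      have hxi : x ≠ i := by rintro rfl; omega
      apply hxi
      apply hinj
      rw [Function.update_self, Function.update_of_ne hxi, hx]
    have hterm : ∀ i, |((if k ≤ l i then ch (Function.update l i (l i - k)) (ν + Multiset.replicate s 1) else 0 : ℤ) : ℝ)|
        ≤ if (n : ℝ) - ρ ≤ l i then ρ ^ ν.card * |(fd l (k + ν.sum + s) : ℝ)| else 0 := by
      intro i
      have hnn : 0 ≤ if (n : ℝ) - ρ ≤ l i then ρ ^ ν.card * |(fd l (k + ν.sum + s) : ℝ)| else 0 := by
        split_ifs <;> positivity
      by_cases hki : k ≤ l i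
      · rw [if_pos hki]
        by_cases hinj : Function.Injective (Function.update l i (l i - k))
        · have hlo := hlow i hki hinj
          rw [if_pos hlo]
          have h1 := ih _ hinj (by
            intro m hm
            obtain ⟨x, hx⟩ := hr m hm
            have hxi : x ≠ i := by
              rintro rfl
              rw [hx] at hlo
              linarith
            exact ⟨x, by rw [Function.update_of_ne hxi, hx]⟩) (fun t ht => hν t (Multiset.mem_cons_of_mem ht))
          refine h1.trans ?_
          refine mul_le_mul_of_nonneg_left ?_ (by positivity)
          have h2 := fd_down k l i (ν.sum + s) hl hki hinj
          rw [show k + ν.sum + s = ν.sum + s + k by ring]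
          exact_mod_cast h2
        · rw [ch_eq_zero _ _ hinj]
          simpa using hnn
      · rw [if_neg hki]
        simpa using hnn
    refine (Finset.abs_sum_le_sum_abs _ _).trans ?_
    have hsum := Finset.sum_le_sum (fun i (_ : i ∈ Finset.univ) => hterm i)
    push_cast at hsum
    refine hsum.trans ?_
    rw [← Finset.sum_filter, Finset.sum_const, nsmul_eq_mul, pow_succ']
    rw [mul_assoc]
    apply mul_le_mul_of_nonneg_right _ (by positivity)
    -- count
    have hc : ⌈(n : ℝ) - ρ⌉₊ ≤ (Finset.univ.filter fun i : Fin n => ¬ (n : ℝ) - ρ ≤ l i).card := by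
      calc ⌈(n : ℝ) - ρ⌉₊ = (Finset.range ⌈(n : ℝ) - ρ⌉₊).card := (Finset.card_range _).symm
        _ ≤ ((Finset.univ.filter fun i : Fin n => ¬ (n : ℝ) - ρ ≤ l i).image l).card := by
          apply Finset.card_le_card
          intro m hm
          have hm' := Nat.lt_ceil.mp (Finset.mem_range.mp hm)
          obtain ⟨x, hx⟩ := hr m hm'
          rw [Finset.mem_image]
          refine ⟨x, ?_, hx⟩
          rw [Finset.mem_filter, hx]
          exact ⟨Finset.mem_univ _, not_le.mpr hm'⟩
        _ ≤ _ := Finset.card_image_le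
    have hc2 := Finset.card_filter_add_card_filter_not (s := (Finset.univ : Finset (Fin n))) (fun i : Fin n => (n : ℝ) - ρ ≤ l i)
    rw [Finset.card_univ, Fintype.card_fin] at hc2
    have hc3 : (n : ℝ) - ρ ≤ ⌈(n : ℝ) - ρ⌉₊ := Nat.le_ceil _
    have hc4 : ((⌈(n : ℝ) - ρ⌉₊ : ℕ) : ℝ) ≤ ((Finset.univ.filter fun i : Fin n => ¬ (n : ℝ) - ρ ≤ l i).card : ℝ) := by
      exact_mod_cast hc
    have hc5 : ((Finset.univ.filter fun i : Fin n => (n : ℝ) - ρ ≤ l i).card : ℝ) +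
      ((Finset.univ.filter fun i : Fin n => ¬ (n : ℝ) - ρ ≤ l i).card : ℝ) = n := by exact_mod_cast hc2
    linarith

end BC

namespace BC

lemma good_init {n : ℕ} {ρ : ℝ} (lam : Fin n → ℕ) (hanti : ∀ i j : Fin n, i ≤ j → lam j ≤ lam i)
    (hrow : ((Finset.univ.filter fun i : Fin n => lam i ≠ 0).card : ℝ) ≤ ρ)
    (hcol : ∀ i : Fin n, (lam i : ℝ) ≤ ρ) : Good ρ (fun i : Fin n => lam i + (n - 1 - (i : ℕ))) := by
  constructor
  · intro i j hij
    have h1 := hanti i j hij.le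
    have h2 := j.isLt
    have h3 : (i : ℕ) < j := hij
    show lam j + (n - 1 - (j : ℕ)) < lam i + (n - 1 - (i : ℕ))
    omega
  · intro i
    have h1 := hcol i
    have h2 : ((n - 1 - (i : ℕ) : ℕ) : ℝ) ≤ n := by exact_mod_cast (by omega)
    push_cast
    linarith
  · intro m hm
    have hρ : 0 ≤ ρ := le_trans (by positivity) hrow
    have hmn : m < n := by
      have : (m : ℝ) < n := by linarith
      exact_mod_cast this
    refine ⟨⟨n - 1 - m, by omega⟩, ?_⟩
    have h0 : lam ⟨n - 1 - m, by omega⟩ = 0 := by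
      by_contra hne
      have hsub : Finset.Iic (⟨n - 1 - m, by omega⟩ : Fin n) ⊆ Finset.univ.filter fun i : Fin n => lam i ≠ 0 := by
        intro x hx
        rw [Finset.mem_filter]
        refine ⟨Finset.mem_univ _, ?_⟩
        have := hanti x _ (Finset.mem_Iic.mp hx)
        omega
      have hc := Finset.card_le_card hsub
      rw [Fin.card_Iic] at hc
      have hc' : n - m ≤ (Finset.univ.filter fun i : Fin n => lam i ≠ 0).card := by
        refine le_trans ?_ hc
        show n - m ≤ n - 1 - m + 1
        omega
      have hc2 : ((n - m : ℕ) : ℝ) ≤ ρ := le_trans (by exact_mod_cast hc') hrow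
      rw [Nat.cast_sub hmn.le] at hc2
      linarith
    show lam _ + (n - 1 - (n - 1 - m)) = m
    rw [h0]
    omega

lemma final_bound {C : ℝ} (hC : 0 < C) {n : ℕ} (hn : 1 ≤ n) (l : Fin n → ℕ)
    (hl : Good (C * Real.sqrt n) l) (ν : Multiset ℕ) (hν : ∀ k ∈ ν, 2 ≤ k) (hs : ν.sum ≤ n) :
    |(ch l (ν + Multiset.replicate (n - ν.sum) 1) : ℝ)| ≤ |(fd l n : ℝ)| *
      ((16 * (48 + 14 * C) + 16 * (1 + C)) * max 1 (((ν.sum - ν.card : ℕ) : ℝ) ^ 2 / n) / Real.sqrt n)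
        ^ (ν.sum - ν.card) := by
  have hcard : 2 * ν.card ≤ ν.sum := by
    have := Multiset.card_nsmul_le_sum hν
    simpa [mul_comm] using this
  obtain ⟨m, hm⟩ : ∃ m, m = ν.sum - ν.card := ⟨_, rfl⟩
  rw [← hm]
  have hn' : (1 : ℝ) ≤ n := by exact_mod_cast hn
  have hn0 : (0 : ℝ) < n := by linarith
  obtain ⟨S, hSd⟩ : ∃ S, S = Real.sqrt n := ⟨_, rfl⟩
  have hSS : S * S = n := by rw [hSd]; exact Real.mul_self_sqrt hn0.le
  have hS0 : 0 < S := by rw [hSd]; exact Real.sqrt_pos.mpr hn0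
  have hS1 : 1 ≤ S := by nlinarith
  rw [← hSd] at hl ⊢
  have hK2 : (ν.sum : ℝ) ≤ 2 * m := by exact_mod_cast (by omega : ν.sum ≤ 2 * m)
  obtain ⟨M, hMd⟩ : ∃ M, M = max 1 ((m : ℝ) ^ 2 / n) := ⟨_, rfl⟩
  have hM1 : 1 ≤ M := hMd ▸ le_max_left _ _
  have hM2 : (m : ℝ) ^ 2 / n ≤ M := hMd ▸ le_max_right _ _
  rw [← hMd]
  have hM2' : (m : ℝ) ^ 2 ≤ M * n := by rwa [div_le_iff₀ hn0] at hM2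
  have hm0 : (0 : ℝ) ≤ m := Nat.cast_nonneg m
  by_cases hK : 2 * ν.sum ≤ n
  · -- small support
    obtain ⟨R, hRd⟩ : ∃ R, R = max S (ν.sum : ℝ) := ⟨_, rfl⟩
    have hRS : S ≤ R := hRd ▸ le_max_left _ _
    have hRK : (ν.sum : ℝ) ≤ R := hRd ▸ le_max_right _ _
    have hR0 : 0 < R := by linarith
    have hKn : (2 : ℝ) * ν.sum ≤ n := by exact_mod_cast hK
    have hRn : R ≤ n := by
      rw [hRd]
      apply max_le
      · nlinarith
      · linarith
    have hδ1 : R / n ≤ 1 := (div_le_one hn0).mpr hRn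
    have hδ0 : 0 < R / n := by positivity
    have hθ0 : 0 < (48 + 14 * C) * (R / n) := by positivity
    have hKI : KI (C * S) (bt (R / n) ((48 + 14 * C) * (R / n))) (n - ν.sum) ν.sum := by
      apply KI_bt hC hn0 hR0 (by nlinarith) (by gcongr) hRK
      rw [Nat.cast_sub hs]
      linarith
    have h1 := MB_all (n := n) (by positivity) (fun k => bt_pos hδ0 hθ0 k) (by simp [bt]) hKI n l ν (n - ν.sum) hl hν
      le_rfl le_rfl (by omega)
    have h2 := (BB_bt hδ0 hδ1 hθ0 ν hν).1
    rw [← hm] at h2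
    have hf : (0 : ℝ) ≤ fd l n := by exact_mod_cast fd_nonneg n l hl.anti
    refine h1.trans ?_
    rw [abs_of_nonneg hf]
    refine mul_le_mul_of_nonneg_left (h2.trans ?_) hf
    apply pow_le_pow_left₀ (by positivity)
    have hRM : R ≤ 2 * M * S := by
      rw [hRd]
      apply max_le
      · nlinarith
      · have : (m : ℝ) ≤ M * S := by
          apply le_of_sq_le_sq _ (by positivity)
          nlinarith [mul_nonneg hn0.le (by nlinarith : 0 ≤ M * M - M)]
        linarith
    rw [← hSS, le_div_iff₀ hS0]
    have e : 8 * ((48 + 14 * C) * (R / (S * S))) * S = 8 * (48 + 14 * C) * (R / S) := by field_simp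
    rw [e]
    have h3 : R / S ≤ 2 * M := by rw [div_le_iff₀ hS0]; exact hRM
    have h4 := mul_le_mul_of_nonneg_left h3 (by positivity : 0 ≤ 8 * (48 + 14 * C))
    have h5 : 0 ≤ 16 * (1 + C) * M := by positivity
    linarith
  · -- large support
    have h1 := crude (by positivity : 0 ≤ C * S) (n - ν.sum) ν l hl.anti.injective hl.lb
      (fun k hk => le_trans (by norm_num) (hν k hk))
    rw [show ν.sum + (n - ν.sum) = n by omega] at h1
    refine h1.trans ?_
    rw [mul_comm]
    refine mul_le_mul_of_nonneg_left ?_ (abs_nonneg _)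
    have h4m : (n : ℝ) ≤ 4 * m := by exact_mod_cast (by omega : n ≤ 4 * m)
    calc (C * S) ^ ν.card ≤ ((1 + C) * S) ^ ν.card := by
          apply pow_le_pow_left₀ (by positivity)
          nlinarith
      _ ≤ ((1 + C) * S) ^ m := by
          apply pow_le_pow_right₀ _ (by omega)
          nlinarith
      _ ≤ _ := by
          apply pow_le_pow_left₀ (by positivity)
          rw [le_div_iff₀ hS0]
          have h16 : (n : ℝ) ≤ 16 * M := by
            have : (n : ℝ) * n ≤ 16 * M * n := by nlinarith
            exact le_of_mul_le_mul_right this hn0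
          have e : (1 + C) * S * S = (1 + C) * n := by rw [← hSS]; ring
          rw [e]
          have h3 := mul_le_mul_of_nonneg_left h16 (by positivity : 0 ≤ 1 + C)
          have h5 : 0 ≤ 16 * (48 + 14 * C) * M := by positivity
          linarith

end BC

/-- the main result. -/
theorem main_result :
    ∀ C : ℝ, 0 < C → ∃ D : ℝ, 0 < D ∧
      ∀ (n : ℕ), 1 ≤ n →
        ∀ lam : Fin n → ℕ,
          (∀ i j : Fin n, i ≤ j → lam j ≤ lam i) →
          (∑ i, lam i = n) →
          (((Finset.univ.filter fun i : Fin n => lam i ≠ 0).card : ℝ) ≤ C * Real.sqrt n) →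
          (∀ i : Fin n, (lam i : ℝ) ≤ C * Real.sqrt n) →
          ∀ π : Equiv.Perm (Fin n),
            |normChar n lam π| ≤
              (D * max 1 ((permLength π : ℝ) ^ 2 / n) / Real.sqrt n) ^ permLength π := by
  intro C hC
  refine ⟨16 * (48 + 14 * C) + 16 * (1 + C), by positivity, ?_⟩
  intro n hn lam hanti _ hrow hcol π
  have hg := BC.good_init lam hanti hrow hcol
  have hs : π.cycleType.sum ≤ n := by
    rw [Equiv.Perm.sum_cycleType]
    simpa using Finset.card_le_univ π.support
  have h := BC.final_bound hC hn _ hg π.cycleType (fun k hk => Equiv.Perm.two_le_of_mem_cycleType hk) hs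
  unfold normChar fullCycleType permLength
  rw [BC.frobChar_eq, BC.frobChar_eq, abs_div]
  have hnn : (0 : ℝ) ≤ (16 * (48 + 14 * C) + 16 * (1 + C)) *
      max 1 (((π.cycleType.sum - π.cycleType.card : ℕ) : ℝ) ^ 2 / n) / Real.sqrt n := by positivity
  apply div_le_of_le_mul₀ (abs_nonneg _) (pow_nonneg hnn _)
  rw [mul_comm]
  exact h
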